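/- arXiv:2202.02599 — 5 statements merged into one kernel-verified Lean document; each statement's English description precedes it below -/
import Mathlib

section
/- Let G be a connected graph, P a longest path in G, and Q a shortest path from a vertex v ∉ V(P) to V(P). Then the length of Q is at most half the length of P. -/
open SimpleGraph

variable {V : Type*} [Fintype V] [DecidableEq V]

/-- Distance from a vertex `u` to the vertex set of a walk `P`. -/
noncomputable def walkDist (G : SimpleGraph V) {a b : V} (P : G.Walk a b) (u : V) : ℕ :=
  P.support.toFinset.inf' ⟨a, List.mem_toFinset.mpr P.start_mem_support⟩ (fun x => G.dist u x)

/-- Eccentricity of a walk: max distance from any vertex of `G` to the walk. -/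
noncomputable def eccW (G : SimpleGraph V) {a b : V} (P : G.Walk a b) : ℕ :=
  Finset.univ.sup (walkDist G P)

/-- Path eccentricity of a graph. -/
noncomputable def pe (G : SimpleGraph V) : ℕ :=
  sInf {m | ∃ (a b : V) (P : G.Walk a b), P.IsPath ∧ eccW G P = m}

/-- `P` is a longest path in `G`. -/
def IsLongestPath (G : SimpleGraph V) {a b : V} (P : G.Walk a b) : Prop :=
  P.IsPath ∧ ∀ (c d : V) (Q : G.Walk c d), Q.IsPath → Q.length ≤ P.length

/-- `G` is `k`-connected. -/
def KConnected (k : ℕ) (G : SimpleGraph V) : Prop :=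
  k + 1 ≤ Fintype.card V ∧
    ∀ S : Finset V, S.card < k → (G.induce ((↑S : Set V)ᶜ)).Connected

/-- Two paths that meet only at their common endpoint concatenate to a path. -/
theorem SimpleGraph.Walk.IsPath.append_of_inter {W : Type*} {G : SimpleGraph W} {u v w : W}
    {p : G.Walk u v} {q : G.Walk v w} (hp : p.IsPath) (hq : q.IsPath)
    (h : ∀ x ∈ p.support, x ∈ q.support → x = v) : (p.append q).IsPath := by
  have hnd := hq.support_nodup
  rw [← Walk.cons_tail_support, List.nodup_cons] at hnd
  refine Walk.IsPath.mk' ?_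
  rw [Walk.support_append, List.nodup_append']
  refine ⟨hp.support_nodup, hnd.2, fun x hxp hxq => ?_⟩
  exact hnd.1 (h x hxp (List.mem_of_mem_tail hxq) ▸ hxq)

theorem stmt2 (G : SimpleGraph V) (hG : G.Connected) {a b v c : V}
    (P : G.Walk a b) (hP : IsLongestPath G P)
    (hv : v ∉ P.support) (Q : G.Walk v c) (hQ : Q.IsPath)
    (hc : c ∈ P.support)
    (hmeet : ∀ x ∈ Q.support, x ∈ P.support → x = c)
    (hshort : Q.length = walkDist G P v) :
    (Q.length : ℝ) ≤ (P.length : ℝ) / 2 := by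
  obtain ⟨q, r, hq, hr, rfl⟩ := hP.1.mem_support_iff_exists_append.mp hc
  have h₁ := hP.2 _ _ _ (hQ.append_of_inter hq.reverse fun x hx hxq => hmeet x hx <| by
    rw [Walk.mem_support_append_iff]
    exact Or.inl (by simpa using hxq))
  have h₂ := hP.2 _ _ _ (hQ.append_of_inter hr fun x hx hxr => hmeet x hx <| by
    rw [Walk.mem_support_append_iff]
    exact Or.inr hxr)
  simp only [Walk.length_append, Walk.length_reverse] at h₁ h₂ ⊢
  have h : 2 * Q.length ≤ q.length + r.length := by omega
  rw [le_div_iff₀ two_pos, mul_comm]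
  exact_mod_cast h
end

section
/- Let G be a k-connected graph with k ≥ 2 and let P be a longest path in G with L edges. Then ecc_G(P) ≤ (L + 2)/(2k + 2). -/
open SimpleGraph

variable {V : Type*} [Fintype V] [DecidableEq V]

section Menger

variable {α : Type*}

/-- `b` is `a` itself or is the head of an arc of `E` leaving `a`. -/
def LazyStep (E : Finset (α × α)) (a b : α) : Prop := a = b ∨ (a, b) ∈ E

/-- `l` is a (lazy) walk from `A` to `B` along arcs of `E`. -/
def IsLinking (E : Finset (α × α)) (A B : Finset α) (l : List α) : Prop :=
  l.IsChain (LazyStep E) ∧ (∃ a ∈ A, a ∈ l.head?) ∧ ∃ b ∈ B, b ∈ l.getLast?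

/-- Every walk from `A` to `B` along arcs of `E` meets `S`. -/
def Separates (E : Finset (α × α)) (A B S : Finset α) : Prop :=
  ∀ l, IsLinking E A B l → ∃ v ∈ S, v ∈ l

theorem List.exists_split_first_mem (T : Finset α) (l : List α) (h : ∃ v ∈ T, v ∈ l) :
    ∃ p t s, l = p ++ t :: s ∧ t ∈ T ∧ ∀ v ∈ p, v ∉ T := by
  induction l with
  | nil => simp at h
  | cons a l ih =>
    by_cases ha : a ∈ T
    · exact ⟨[], a, l, rfl, ha, by simp⟩
    · obtain ⟨p, t, s, rfl, ht, hp⟩ := ih (by grind)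
      exact ⟨a :: p, t, s, rfl, ht, by grind⟩

theorem List.exists_split_last_mem (T : Finset α) (l : List α) (h : ∃ v ∈ T, v ∈ l) :
    ∃ p t s, l = p ++ t :: s ∧ t ∈ T ∧ ∀ v ∈ s, v ∉ T := by
  obtain ⟨p, t, s, hl, ht, hp⟩ := List.exists_split_first_mem T l.reverse (by simpa using h)
  exact ⟨s.reverse, t, p.reverse, by simpa using congrArg List.reverse hl, ht, by simpa using hp⟩

section

variable {E : Finset (α × α)} {A B X Y : Finset α} {p s : List α} {v : α}

theorem IsLinking.take (h : IsLinking E A B (p ++ v :: s)) (hv : v ∈ X) :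
    IsLinking E A X (p ++ [v]) := by
  obtain ⟨hc, ⟨a, ha, hh⟩, -⟩ := h
  refine ⟨(List.isChain_split.1 hc).1, ⟨a, ha, ?_⟩, v, hv, by simp⟩
  cases p <;> simpa using hh

theorem IsLinking.drop (h : IsLinking E A B (p ++ v :: s)) (hv : v ∈ X) :
    IsLinking E X B (v :: s) := by
  obtain ⟨hc, -, b, hb, hh⟩ := h
  refine ⟨(List.isChain_split.1 hc).2, ⟨v, hv, by simp⟩, b, hb, ?_⟩
  simpa using hh

theorem IsLinking.join (h₁ : IsLinking E A X (p ++ [v])) (h₂ : IsLinking E Y B (v :: s)) :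
    IsLinking E A B (p ++ v :: s) := by
  obtain ⟨hc, ⟨a, ha, hh⟩, -⟩ := h₁
  obtain ⟨hc', -, b, hb, hh'⟩ := h₂
  refine ⟨List.isChain_split.2 ⟨hc, hc'⟩, ⟨a, ha, ?_⟩, b, hb, by simpa using hh'⟩
  cases p <;> simpa using hh

theorem IsLinking.append {l m : List α} (h₁ : IsLinking E A X l) (h₂ : IsLinking E Y B m)
    (h : ∀ a ∈ l.getLast?, ∀ b ∈ m.head?, LazyStep E a b) : IsLinking E A B (l ++ m) := by
  obtain ⟨hc, ⟨a, ha, hh⟩, -⟩ := h₁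
  obtain ⟨hc', -, b, hb, hh'⟩ := h₂
  refine ⟨List.isChain_append.2 ⟨hc, hc', h⟩, ⟨a, ha, ?_⟩, b, hb, ?_⟩
  · rw [Option.mem_def] at hh ⊢; simp [List.head?_append, hh]
  · rw [Option.mem_def] at hh' ⊢; simp [List.getLast?_append, hh']

theorem IsLinking.mono {E' : Finset (α × α)} (hE : E ⊆ E') {l : List α} (h : IsLinking E A B l) :
    IsLinking E' A B l :=
  ⟨h.1.imp fun _ _ => Or.imp_right fun h => hE h, h.2⟩

end

theorem exists_linking_truncated_right {E : Finset (α × α)} {A B : Finset α} {k : ℕ}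
    {f : Fin k → List α} (hf : ∀ i, IsLinking E A B (f i))
    (hd : ∀ i j v, v ∈ f i → v ∈ f j → i = j) :
    ∃ (p : Fin k → List α) (t : Fin k → α), (∀ i, IsLinking E A B (p i ++ [t i])) ∧
      (∀ i, t i ∈ B) ∧ (∀ i, ∀ w ∈ p i, w ∉ B) ∧
      ∀ i j v, v ∈ p i ++ [t i] → v ∈ p j ++ [t j] → i = j := by
  have key : ∀ i, ∃ p t s, f i = p ++ t :: s ∧ t ∈ B ∧ ∀ v ∈ p, v ∉ B := fun i => by
    obtain ⟨-, -, b, hb, hbl⟩ := hf i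
    exact List.exists_split_first_mem B _ ⟨b, hb, List.mem_of_mem_getLast? hbl⟩
  choose p t s hfi ht hp using key
  refine ⟨p, t, fun i => ?_, ht, hp, fun i j v hi hj => hd i j v ?_ ?_⟩
  · exact (hfi i ▸ hf i).take (ht i)
  · rw [hfi]; grind
  · rw [hfi]; grind

theorem exists_linking_truncated_left {E : Finset (α × α)} {A B : Finset α} {k : ℕ}
    {f : Fin k → List α} (hf : ∀ i, IsLinking E A B (f i))
    (hd : ∀ i j v, v ∈ f i → v ∈ f j → i = j) :
    ∃ (h : Fin k → α) (s : Fin k → List α), (∀ i, IsLinking E A B (h i :: s i)) ∧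
      (∀ i, h i ∈ A) ∧ (∀ i, ∀ w ∈ s i, w ∉ A) ∧
      ∀ i j v, v ∈ h i :: s i → v ∈ h j :: s j → i = j := by
  have key : ∀ i, ∃ p t s, f i = p ++ t :: s ∧ t ∈ A ∧ ∀ v ∈ s, v ∉ A := fun i => by
    obtain ⟨-, ⟨a, ha, hal⟩, -⟩ := hf i
    exact List.exists_split_last_mem A _ ⟨a, ha, List.mem_of_mem_head? hal⟩
  choose p h s hfi ht hs using key
  refine ⟨h, s, fun i => ?_, ht, hs, fun i j v hi hj => hd i j v ?_ ?_⟩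
  · exact (hfi i ▸ hf i).drop (ht i)
  · rw [hfi]; grind
  · rw [hfi]; grind

variable [DecidableEq α]

theorem isChain_lazyStep_or_prefix {E : Finset (α × α)} {x y : α} {l : List α}
    (h : l.IsChain (LazyStep (insert (x, y) E))) :
    l.IsChain (LazyStep E) ∨ ∃ p s, l = p ++ x :: s ∧ (p ++ [x]).IsChain (LazyStep E) := by
  induction l with
  | nil => simp
  | cons a l ih =>
    cases l with
    | nil => simp
    | cons b l =>
      by_cases hab : a = x
      · exact .inr ⟨[], b :: l, by simp [hab], by simp⟩
      rw [List.isChain_cons_cons] at h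
      have hs : LazyStep E a b := by
        have := h.1
        simp only [LazyStep, Finset.mem_insert, Prod.mk.injEq] at this ⊢
        tauto
      obtain h' | ⟨p, s, hl, hc⟩ := ih h.2
      · exact .inl (List.isChain_cons_cons.2 ⟨hs, h'⟩)
      · refine .inr ⟨a :: p, s, by simp [hl], ?_⟩
        cases p <;> simp_all

theorem isChain_lazyStep_or_suffix {E : Finset (α × α)} {x y : α} {l : List α}
    (h : l.IsChain (LazyStep (insert (x, y) E))) :
    l.IsChain (LazyStep E) ∨ ∃ p s, l = p ++ y :: s ∧ (y :: s).IsChain (LazyStep E) := by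
  induction l with
  | nil => simp
  | cons a l ih =>
    cases l with
    | nil => simp
    | cons b l =>
      rw [List.isChain_cons_cons] at h
      obtain h' | ⟨p, s, hl, hc⟩ := ih h.2
      · by_cases hs : LazyStep E a b
        · exact .inl (List.isChain_cons_cons.2 ⟨hs, h'⟩)
        · have hb : b = y := by
            have := h.1
            simp only [LazyStep, Finset.mem_insert, Prod.mk.injEq] at this hs
            tauto
          subst hb
          exact .inr ⟨[a], l, rfl, h'⟩
      · exact .inr ⟨a :: p, s, by simp [hl], hc⟩

theorem Separates.of_prefix {E : Finset (α × α)} {A B S Z : Finset α} {x y : α}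
    (hS : Separates E A B S) (hZ : Separates E A (insert x S) Z) :
    Separates (insert (x, y) E) A B Z := by
  intro l hl
  obtain ⟨p, v, s, rfl, hv, hc⟩ : ∃ p v s, l = p ++ v :: s ∧ v ∈ insert x S ∧
      (p ++ [v]).IsChain (LazyStep E) := by
    obtain h | ⟨p, s, h, hc⟩ := isChain_lazyStep_or_prefix hl.1
    · obtain ⟨v, hv, hvl⟩ := hS l ⟨h, hl.2⟩
      obtain ⟨p, s, rfl⟩ := List.append_of_mem hvl
      exact ⟨p, v, s, rfl, by simp [hv], (List.isChain_split.1 h).1⟩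
    · exact ⟨p, x, s, h, by simp, hc⟩
  obtain ⟨z, hz, hzl⟩ := hZ _ ⟨hc, (hl.take hv).2⟩
  exact ⟨z, hz, by grind⟩

theorem Separates.of_suffix {E : Finset (α × α)} {A B S Z : Finset α} {x y : α}
    (hS : Separates E A B S) (hZ : Separates E (insert y S) B Z) :
    Separates (insert (x, y) E) A B Z := by
  intro l hl
  obtain ⟨p, v, s, rfl, hv, hc⟩ : ∃ p v s, l = p ++ v :: s ∧ v ∈ insert y S ∧
      (v :: s).IsChain (LazyStep E) := by
    obtain h | ⟨p, s, h, hc⟩ := isChain_lazyStep_or_suffix hl.1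
    · obtain ⟨v, hv, hvl⟩ := hS l ⟨h, hl.2⟩
      obtain ⟨p, s, rfl⟩ := List.append_of_mem hvl
      exact ⟨p, v, s, rfl, by simp [hv], (List.isChain_split.1 h).2⟩
    · exact ⟨p, y, s, h, by simp, hc⟩
  obtain ⟨z, hz, hzl⟩ := hZ _ ⟨hc, (hl.drop hv).2⟩
  exact ⟨z, hz, by grind⟩

theorem Separates.insert_right {E : Finset (α × α)} {A B S : Finset α} {x y : α}
    (hS : Separates E A B S) : Separates (insert (x, y) E) A B (insert x S) :=
  hS.of_prefix fun l hl => by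
    obtain ⟨-, -, b, hb, hbl⟩ := hl
    exact ⟨b, hb, List.mem_of_mem_getLast? hbl⟩

theorem Separates.insert_left {E : Finset (α × α)} {A B S : Finset α} {x y : α}
    (hS : Separates E A B S) : Separates (insert (x, y) E) A B (insert y S) :=
  hS.of_suffix fun l hl => by
    obtain ⟨-, ⟨a, ha, hal⟩, -⟩ := hl
    exact ⟨a, ha, List.mem_of_mem_head? hal⟩

/-- Where a walk from `A` to a separator crosses a walk from the separator to `B`. -/
theorem Separates.eq_of_mem_of_mem {E : Finset (α × α)} {A B S X Y : Finset α}
    (hS : Separates E A B S) (hX : S ⊆ X) (hY : S ⊆ Y) {p s : List α} {t h v : α}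
    (h₁ : IsLinking E A X (p ++ [t])) (h₂ : IsLinking E Y B (h :: s))
    (hp : ∀ w ∈ p, w ∉ X) (hs : ∀ w ∈ s, w ∉ Y) (hv₁ : v ∈ p ++ [t]) (hv₂ : v ∈ h :: s) :
    v ∈ S ∧ t = v ∧ h = v := by
  have hvS : v ∈ S := by
    by_contra hvS
    obtain ⟨p₁, s₁, e₁⟩ := List.append_of_mem hv₁
    obtain ⟨p₂, s₂, e₂⟩ := List.append_of_mem hv₂
    rw [e₁] at h₁
    rw [e₂] at h₂
    obtain ⟨w, hwS, hw⟩ := hS _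
      ((h₁.take (Finset.mem_singleton_self v)).join (h₂.drop (Finset.mem_singleton_self v)))
    have hp₁ : p = p₁ ++ (v :: s₁).dropLast := by
      rw [← List.dropLast_append_of_ne_nil (List.cons_ne_nil v s₁), ← e₁, List.dropLast_concat]
    have hs₂ : ∀ w ∈ s₂, w ∈ s := by
      cases p₂ <;> grind
    grind
  refine ⟨hvS, ?_, ?_⟩ <;> grind

/-- Menger's theorem for disjoint walks between two vertex sets. -/
theorem exists_disjoint_linkings (E : Finset (α × α)) (A B : Finset α) (k : ℕ)
    (hsep : ∀ S, Separates E A B S → k ≤ S.card) :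
    ∃ f : Fin k → List α, (∀ i, IsLinking E A B (f i)) ∧
      ∀ i j v, v ∈ f i → v ∈ f j → i = j := by
  induction E using Finset.induction_on generalizing A B with
  | empty =>
    have hcard : k ≤ (A ∩ B).card := hsep _ fun l hl => by
      obtain ⟨hc, ⟨a, ha, hal⟩, b, hb, hbl⟩ := hl
      have hc : l.IsChain (· = ·) := hc.imp fun x y h => by simpa [LazyStep] using h
      cases l with
      | nil => simp at hal
      | cons c l =>
        obtain rfl : c = a := by simpa using hal
        have := List.pairwise_cons.1 (List.isChain_iff_pairwise.1 hc)
        have hbl := List.mem_of_mem_getLast? hbl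
        refine ⟨c, ?_, by simp⟩
        grind
    obtain ⟨T, hT, hTk⟩ := Finset.exists_subset_card_eq hcard
    let e := (T.equivFinOfCardEq hTk).symm
    refine ⟨fun i => [(e i : α)], fun i => ?_, fun i j v hi hj => ?_⟩
    · have := hT (e i).2
      simp only [Finset.mem_inter] at this
      exact ⟨by simp, ⟨e i, this.1, by simp⟩, e i, this.2, by simp⟩
    · simp only [List.mem_singleton] at hi hj
      exact e.injective (Subtype.ext (hi.symm.trans hj))
  | insert e E _ ih =>
    obtain ⟨x, y⟩ := e
    by_cases hE : ∀ S, Separates E A B S → k ≤ S.card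
    · obtain ⟨f, hf, hd⟩ := ih A B hE
      exact ⟨f, fun i => (hf i).mono (Finset.subset_insert _ _), hd⟩
    push Not at hE
    obtain ⟨S, hS, hSk⟩ := hE
    have hXk := hsep _ (hS.insert_right (x := x) (y := y))
    have hYk := hsep _ (hS.insert_left (x := x) (y := y))
    have hx : x ∉ S := fun h => by rw [Finset.insert_eq_of_mem h] at hXk; omega
    have hy : y ∉ S := fun h => by rw [Finset.insert_eq_of_mem h] at hYk; omega
    obtain ⟨f, hf, hfd⟩ := ih A (insert x S) fun Z hZ => hsep Z (hS.of_prefix hZ)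
    obtain ⟨g, hg, hgd⟩ := ih (insert y S) B fun Z hZ => hsep Z (hS.of_suffix hZ)
    obtain ⟨p, t, hl, ht, hp, hpd⟩ := exists_linking_truncated_right hf hfd
    obtain ⟨h, s, hr, hh, hs, hsd⟩ := exists_linking_truncated_left hg hgd
    have hinj : Function.Injective h := fun i j hij => hsd i j (h i) (by simp) (by simp [hij])
    have himg : Finset.univ.image h = insert y S := by
      refine Finset.eq_of_subset_of_card_le (by grind) ?_
      rw [Finset.card_image_of_injective _ hinj, Finset.card_univ, Fintype.card_fin,
        Finset.card_insert_of_notMem hy]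
      omega
    have hcross : ∀ i j v, v ∈ p i ++ [t i] → v ∈ h j :: s j → v ∈ S ∧ t i = v ∧ h j = v :=
      fun i j v => hS.eq_of_mem_of_mem (Finset.subset_insert _ _) (Finset.subset_insert _ _)
        (hl i) (hr j) (hp i) (hs j)
    have hπ : ∀ i, ∃ j, h j = if t i = x then y else t i := fun i => by
      have : (if t i = x then y else t i) ∈ Finset.univ.image h := by
        rw [himg]
        have := ht i
        grind
      simpa using this
    choose π hπ using hπ
    have htinj : ∀ i j, t i = t j → i = j := fun i j hij =>
      hpd i j (t i) (by simp) (by simp [hij])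
    refine ⟨fun i => (p i ++ [t i]) ++ (h (π i) :: s (π i)), fun i => ?_, fun i j v hi hj => ?_⟩
    · refine ((hl i).mono (Finset.subset_insert _ _)).append
        ((hr (π i)).mono (Finset.subset_insert _ _)) ?_
      have := hπ i
      simp only [List.getLast?_append, List.getLast?_singleton, List.head?_cons, LazyStep]
      grind
    · have key : ∀ i j, v ∈ p i ++ [t i] → v ∈ h (π j) :: s (π j) → i = j := fun i j hi hj => by
        obtain ⟨h1, h2, h3⟩ := hcross i (π j) v hi hj
        have := hπ j
        apply htinj
        grind
      rw [List.mem_append] at hi hj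
      rcases hi with hi | hi <;> rcases hj with hj | hj
      · exact hpd i j v hi hj
      · exact key i j hi hj
      · exact (key j i hj hi).symm
      · have e := hsd _ _ v hi hj
        have h1 := hπ i
        have h2 := hπ j
        have h3 := ht i
        have h4 := ht j
        apply htinj
        grind

end Menger

theorem exists_nodup_isChain {α : Type*} {E : Finset (α × α)} {l : List α}
    (h : l.IsChain (LazyStep E)) :
    ∃ m : List α, m.IsChain (fun a b => (a, b) ∈ E) ∧ m.Nodup ∧ m ⊆ l ∧
      m.head? = l.head? ∧ m.getLast? = l.getLast? := by
  induction l with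
  | nil => exact ⟨[], by simp⟩
  | cons a l ih =>
    obtain ⟨m, hc, hn, hs, hh, hl⟩ := ih h.tail
    by_cases ha : a ∈ m
    · obtain ⟨p, s, rfl⟩ := List.append_of_mem ha
      refine ⟨a :: s, (List.isChain_split.1 hc).2, hn.of_append_right, by grind, rfl, ?_⟩
      have : l.getLast? = (a :: s).getLast? := by
        rw [← hl, List.getLast?_append_of_ne_nil _ (List.cons_ne_nil a s)]
      rw [List.getLast?_cons (l := l), this, List.getLast?_cons]
      simp
    · cases l with
      | nil =>
        obtain rfl : m = [] := by simpa using hh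
        exact ⟨[a], by simp⟩
      | cons b l =>
        cases m with
        | nil => simp at hh
        | cons c m =>
          obtain rfl : c = b := by simpa using hh
          have hac : (a, c) ∈ E := (List.isChain_cons_cons.1 h).1.resolve_left (by grind)
          exact ⟨a :: c :: m, by simp [hac, hc], by grind, by grind, rfl, by simpa using hl⟩

theorem IsLongestPath.list_length_le {α : Type*} {G : SimpleGraph α} {a b : α}
    {P : G.Walk a b} (hP : IsLongestPath G P) {l : List α} (hc : l.IsChain G.Adj) (hn : l.Nodup) :
    l.length ≤ P.length + 1 := by
  by_cases hne : l = []
  · simp [hne]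
  have := hP.2 _ _ (Walk.ofSupport l hne hc) (by
    rw [Walk.isPath_def, Walk.support_ofSupport]; exact hn)
  rw [Walk.length_ofSupport] at this
  omega

theorem dist_le_of_isChain {α : Type*} {G : SimpleGraph α} {u v : α} {r : List α}
    (hc : (u :: (r ++ [v])).IsChain G.Adj) : G.dist u v ≤ r.length + 1 := by
  have := dist_le (Walk.ofSupport _ (List.cons_ne_nil _ _) hc)
  rw [Walk.length_ofSupport] at this
  simpa using this

theorem isChain_reverse_append {α : Type*} {G : SimpleGraph α} {u v w : α} {r s : List α}
    (hr : (u :: (r ++ [v])).IsChain G.Adj) (hs : (u :: (s ++ [w])).IsChain G.Adj) :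
    (v :: (r.reverse ++ u :: (s ++ [w]))).IsChain G.Adj := by
  have hr' : (u :: (r ++ [v])).reverse.IsChain G.Adj :=
    List.isChain_reverse.2 (hr.imp fun _ _ h => h.symm)
  rw [← List.cons_append, List.isChain_split]
  exact ⟨by simpa using hr', hs⟩

/-- In a `k`-connected graph, separating the neighbours of `u` from a large set `B` inside `G - u`
takes at least `k` vertices. -/
theorem KConnected.le_card_of_separates {G : SimpleGraph V} {k : ℕ} (hG : KConnected k G) {u : V}
    {A B Z : Finset V} {E : Finset (V × V)} (hA : ∀ v, G.Adj u v → v ∈ A)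
    (hE : ∀ v w, G.Adj v w → v ≠ u → w ≠ u → (v, w) ∈ E) (hu : u ∉ B) (hB : k ≤ B.card)
    (hZ : Separates E A B Z) : k ≤ Z.card := by
  by_contra! hk
  have hS : (Z.erase u).card < k := (Finset.card_erase_le).trans_lt hk
  obtain ⟨b, hb, hbS⟩ := Finset.exists_mem_notMem_of_card_lt_card (hS.trans_le hB)
  obtain ⟨W, hW⟩ := (hG.2 _ hS).preconnected.exists_isPath ⟨u, by simp⟩
    ⟨b, by simpa [not_imp_not] using hbS⟩
  cases W with
  | nil => exact hu hb
  | cons h W =>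
    rename_i v
    rw [Walk.cons_isPath_iff] at hW
    have hne : ∀ x ∈ W.support.map Subtype.val, x ≠ u := by
      rintro x hx rfl
      simp only [List.mem_map] at hx
      obtain ⟨y, hy, hyx⟩ := hx
      exact hW.2 (by convert hy; exact hyx.symm)
    have hlink : IsLinking E A B (W.support.map Subtype.val) := by
      refine ⟨?_, ⟨v, hA _ h, ?_⟩, b, hb, ?_⟩
      · rw [List.isChain_map]
        refine W.isChain_adj_support.imp_of_mem_imp fun x y hx hy hxy => .inr ?_
        exact hE _ _ hxy (hne _ (List.mem_map_of_mem hx)) (hne _ (List.mem_map_of_mem hy))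
      · rw [Option.mem_def, List.head?_map, List.head?_eq_some_head W.support_ne_nil,
          W.head_support, Option.map_some]
      · rw [Option.mem_def, List.getLast?_map, List.getLast?_eq_some_getLast W.support_ne_nil,
          W.getLast_support, Option.map_some]
    obtain ⟨z, hz, hzW⟩ := hZ _ hlink
    have hzu := hne z hzW
    simp only [List.mem_map] at hzW
    obtain ⟨y, -, rfl⟩ := hzW
    exact y.2 (Finset.mem_coe.2 (Finset.mem_erase.2 ⟨hzu, hz⟩))

/-- Fan version of Menger's theorem. -/
theorem KConnected.exists_fan {G : SimpleGraph V} {k : ℕ} (hG : KConnected k G) {u : V}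
    {B : Finset V} (hu : u ∉ B) (hB : k ≤ B.card) :
    ∃ (r : Fin k → List V) (t : Fin k → V), (∀ i, t i ∈ B) ∧ Function.Injective t ∧
      (∀ i, (u :: (r i ++ [t i])).IsChain G.Adj) ∧ (∀ i, (u :: r i).Nodup) ∧
      (∀ i, ∀ v ∈ r i, v ∉ B) ∧ ∀ i j v, v ∈ r i → v ∈ r j → i = j := by
  classical
  let E : Finset (V × V) := {e | G.Adj e.1 e.2 ∧ e.1 ≠ u ∧ e.2 ≠ u}
  let A : Finset V := {v | G.Adj u v}
  obtain ⟨f, hf, hd⟩ := exists_disjoint_linkings E A B k fun Z hZ =>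
    hG.le_card_of_separates (by simp [A]) (by simp +contextual [E]) hu hB hZ
  obtain ⟨p, t, hl, ht, hp, hpd⟩ := exists_linking_truncated_right hf hd
  have key : ∀ i, ∃ r : List V, (u :: (r ++ [t i])).IsChain G.Adj ∧ (u :: r).Nodup ∧ r ⊆ p i := by
    intro i
    obtain ⟨hc, ⟨a, ha, hh⟩, -⟩ := hl i
    obtain ⟨m, hmc, hmn, hms, hmh, hml⟩ := exists_nodup_isChain hc
    obtain ⟨r, rfl⟩ : ∃ r, m = r ++ [t i] := by
      obtain rfl | ⟨r, c, rfl⟩ := List.eq_nil_or_concat' m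
      · simp at hml
      · exact ⟨r, by simpa using hml⟩
    have hhead : (r ++ [t i]).head? = some a := hmh.trans hh
    have hcu : ∀ v ∈ r ++ [t i], v ≠ u := by
      refine List.IsChain.induction (fun v => v ≠ u) _ hmc ?_ ?_
      · intro x y hxy _
        simp_all [E]
      · intro hne
        rw [List.head?_eq_some_head hne, Option.some_inj] at hhead
        rw [hhead]
        simp only [A, Finset.mem_filter_univ] at ha
        exact ha.ne'
    refine ⟨r, ?_, ?_, ?_⟩
    · refine List.isChain_cons.2 ⟨?_, hmc.imp fun x y h => ?_⟩
      · rintro y hy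
        rw [hhead] at hy
        simp_all [A]
      · simp_all [E]
    · grind
    · intro v hv
      have := hms (List.mem_append_left _ hv)
      grind
  choose r hr hn hs using key
  exact ⟨r, t, ht, fun i j hij => hpd i j (t i) (by simp) (by simp [hij]), hr, hn,
    fun i v hv => hp i v (hs i hv), fun i j v hi hj => hpd i j v
      (List.mem_append_left _ (hs i hi)) (List.mem_append_left _ (hs j hj))⟩

theorem IsLongestPath.le_card_support {G : SimpleGraph V} {k : ℕ} (hG : KConnected k G) {a b u : V}
    {P : G.Walk a b} (hP : IsLongestPath G P) (hu : u ∉ P.support) :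
    k ≤ P.support.toFinset.card := by
  by_contra! hk
  have hS : (P.support.toFinset.erase a).card < k := (Finset.card_erase_le).trans_lt hk
  obtain ⟨W⟩ := (hG.2 _ hS).preconnected ⟨a, by simp⟩ ⟨u, by simp [hu]⟩
  cases W with
  | nil => exact hu P.start_mem_support
  | cons h W =>
    rename_i v
    have hav : G.Adj a v := h
    have hv : (v : V) ∉ P.support := fun hv => by
      have := v.2
      simp [hav.ne', hv] at this
    have := hP.2 _ _ (Walk.cons hav.symm P) (by rw [Walk.cons_isPath_iff]; exact ⟨hP.1, hv⟩)
    simp at this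

theorem exists_eccW_le_dist (G : SimpleGraph V) {a b : V} (P : G.Walk a b) :
    ∃ u, ∀ v ∈ P.support, eccW G P ≤ G.dist u v := by
  obtain ⟨u, -, hu⟩ := Finset.exists_mem_eq_sup Finset.univ ⟨a, Finset.mem_univ a⟩ (walkDist G P)
  refine ⟨u, fun v hv => ?_⟩
  rw [eccW, hu]
  exact Finset.inf'_le _ (List.mem_toFinset.2 hv)

theorem two_mul_mul_succ_le_of_gaps {k e L : ℕ} (he : 0 < e) (hk : 2 ≤ k) (n : Fin k → ℕ)
    (hinj : Function.Injective n) (hlo : ∀ i, 2 * e ≤ n i + 1) (hhi : ∀ i, n i + 2 * e ≤ L + 1)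
    (hgap : ∀ i j, n i < n j → n i + 2 * e ≤ n j) : 2 * e * (k + 1) ≤ L + 2 := by
  let q : Fin k → ℕ := fun i => (n i + 1) / (2 * e)
  have hlt : ∀ i j, n i < n j → q i < q j := fun i j h => by
    have h1 : (n i + 1 + 2 * e) / (2 * e) ≤ (n j + 1) / (2 * e) :=
      Nat.div_le_div_right (by have := hgap i j h; omega)
    rw [Nat.add_div_right _ (by omega)] at h1
    exact h1
  have hq : Function.Injective q := fun i j h => by
    by_contra hne
    rcases lt_or_gt_of_ne (hinj.ne hne) with h' | h'
    · exact (hlt _ _ h').ne h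
    · exact (hlt _ _ h').ne' h
  have hmem : Finset.univ.image q ⊆ Finset.Icc 1 ((L + 2 - 2 * e) / (2 * e)) := by
    intro x hx
    obtain ⟨i, -, rfl⟩ := Finset.mem_image.1 hx
    rw [Finset.mem_Icc]
    exact ⟨(Nat.one_le_div_iff (by omega)).2 (hlo i),
      Nat.div_le_div_right (by have := hhi i; omega)⟩
  have hcard := Finset.card_le_card hmem
  rw [Finset.card_image_of_injective _ hq, Nat.card_Icc, Finset.card_univ, Fintype.card_fin,
    Nat.add_sub_cancel, Nat.le_div_iff_mul_le (by omega)] at hcard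
  have := hhi ⟨0, by omega⟩
  rw [mul_add, mul_comm (2 * e) k]
  omega

/-- A segment of a path may be replaced by a detour `M` between its end vertices. -/
theorem isChain_detour {α : Type*} {G : SimpleGraph α} {x y : α} {p s M : List α}
    (hp : (p ++ [x]).IsChain G.Adj) (hs : (y :: s).IsChain G.Adj)
    (hM : (x :: (M ++ [y])).IsChain G.Adj) :
    (p ++ [x] ++ M ++ y :: s).IsChain G.Adj := by
  have : p ++ [x] ++ M ++ y :: s = p ++ x :: (M ++ y :: s) := by simp
  rw [this, List.isChain_split, List.isChain_cons_split]
  exact ⟨hp, hM, hs⟩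

/-- The bound on the eccentricity of a longest path, cleared of denominators. -/
theorem IsLongestPath.two_mul_eccW_mul_le {G : SimpleGraph V} {k : ℕ} (hk : 2 ≤ k)
    (hG : KConnected k G) {a b : V} {P : G.Walk a b} (hP : IsLongestPath G P) :
    2 * eccW G P * (k + 1) ≤ P.length + 2 := by
  obtain ⟨u, hu⟩ := exists_eccW_le_dist G P
  obtain he | he := Nat.eq_zero_or_pos (eccW G P)
  · simp [he]
  set e := eccW G P
  have huP : u ∉ P.support := fun h => by
    have := hu u h
    rw [dist_self] at this
    omega
  obtain ⟨r, t, ht, htinj, hc, hn, hr, hd⟩ :=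
    hG.exists_fan (by simpa using huP) (hP.le_card_support hG huP)
  simp only [List.mem_toFinset] at ht hr
  have hre : ∀ i, e ≤ (r i).length + 1 := fun i => (hu _ (ht i)).trans (dist_le_of_isChain (hc i))
  choose p s hps using fun i => List.append_of_mem (ht i)
  have hPn : P.support.Nodup := hP.1.support_nodup
  have hPc : P.support.IsChain G.Adj := P.isChain_adj_support
  have htake : ∀ i, p i ++ [t i] = P.support.take ((p i).length + 1) := fun i => by
    rw [hps i]; simp [List.take_append]
  have hdrop : ∀ i, t i :: s i = P.support.drop (p i).length := fun i => by
    rw [hps i]; simp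
  have hlen : ∀ i, (p i).length + (s i).length = P.length := fun i => by
    have := congrArg List.length (hps i)
    simp at this
    omega
  have hpc : ∀ i, (p i ++ [t i]).IsChain G.Adj := fun i => by
    rw [htake]; exact hPc.take _
  have hsc : ∀ i, (t i :: s i).IsChain G.Adj := fun i => by
    rw [hdrop]; exact hPc.drop _
  have hpP : ∀ i, ∀ v ∈ p i ++ [t i], v ∈ P.support := fun i v hv => by
    rw [htake] at hv; exact List.mem_of_mem_take hv
  have hsP : ∀ i, ∀ v ∈ t i :: s i, v ∈ P.support := fun i v hv => by
    rw [hdrop] at hv; exact List.mem_of_mem_drop hv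
  have hpn : ∀ i, (p i ++ [t i]).Nodup := fun i => by
    rw [htake]; exact hPn.sublist (List.take_sublist _ _)
  have hsn : ∀ i, (t i :: s i).Nodup := fun i => by
    rw [hdrop]; exact hPn.sublist (List.drop_sublist _ _)
  let M : Fin k → Fin k → List V := fun i j => (r i).reverse ++ u :: r j
  have hMc : ∀ i j, (t i :: (M i j ++ [t j])).IsChain G.Adj := fun i j => by
    simpa [M] using isChain_reverse_append (hc i) (hc j)
  have hMP : ∀ i j, ∀ v ∈ M i j, v ∉ P.support := fun i j v hv => by
    grind
  have hMn : ∀ i j, i ≠ j → (M i j).Nodup := fun i j hij => by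
    have := hn i
    have := hn j
    have hdij := hd i j
    simp only [M, List.nodup_append, List.nodup_reverse, List.mem_reverse]
    grind
  have hMl : ∀ i j, 2 * e ≤ (M i j).length + 1 := fun i j => by
    have := hre i
    have := hre j
    simp only [M, List.length_append, List.length_reverse, List.length_cons]
    omega
  have hother : ∀ i : Fin k, ∃ j, j ≠ i := fun i => by
    have : Nontrivial (Fin k) := Fin.nontrivial_iff_two_le.2 hk
    exact exists_ne i
  refine two_mul_mul_succ_le_of_gaps he hk (fun i => (p i).length) ?_ ?_ ?_ ?_
  · intro i j hij
    have h1 := hdrop i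
    rw [show (p i).length = (p j).length from hij, ← hdrop j] at h1
    exact htinj (List.cons.inj h1).1
  · intro i
    obtain ⟨j, hj⟩ := hother i
    have := hP.list_length_le (l := M j i ++ t i :: s i)
      (by
        have := (hMc j i).tail
        rw [List.isChain_split]
        exact ⟨this, hsc i⟩)
      (by
        have h1 := hMn j i hj
        have h2 := hsn i
        have h3 := hMP j i
        have h4 := hsP i
        rw [List.nodup_append]
        grind)
    have h1 := hMl j i
    have h2 := hlen i
    simp only [List.length_append, List.length_cons] at this
    omega
  · intro i
    obtain ⟨j, hj⟩ := hother i
    have := hP.list_length_le (l := p i ++ [t i] ++ M i j)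
      (by
        have h := hMc i j
        rw [← List.cons_append] at h
        rw [List.append_assoc, List.singleton_append, List.isChain_split]
        exact ⟨hpc i, h.left_of_append⟩)
      (by
        have h1 := hMn i j hj.symm
        have h2 := hpn i
        have h3 := hMP i j
        have h4 := hpP i
        rw [List.nodup_append]
        grind)
    have h1 := hMl i j
    simp only [List.length_append, List.length_cons, List.length_nil] at this
    omega
  · intro i j hij
    have hne : i ≠ j := by rintro rfl; exact hij.false
    have hdisj : (p i ++ [t i]).Disjoint (t j :: s j) := by
      rw [htake, hdrop]
      exact List.disjoint_take_drop hPn hij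
    have := hP.list_length_le (isChain_detour (hpc i) (hsc j) (hMc i j))
      (by
        have h1 := hMn i j hne
        have h2 := hpn i
        have h3 := hMP i j
        have h4 := hpP i
        have h5 := hsP j
        have h6 := hsn j
        refine List.Nodup.append (List.Nodup.append h2 h1 ?_) h6 ?_
        · exact fun v hv hv' => h3 v hv' (h4 v hv)
        · intro v hv hv'
          rcases List.mem_append.1 hv with hv | hv
          · exact hdisj hv hv'
          · exact h3 v hv (h5 v hv'))
    have h1 := hMl i j
    have h2 := hlen j
    simp only [List.length_append, List.length_cons, List.length_nil] at this
    omega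

theorem stmt4 (G : SimpleGraph V) (k : ℕ) (hk : 2 ≤ k) (hG : KConnected k G)
    {a b : V} (P : G.Walk a b) (hP : IsLongestPath G P) :
    (eccW G P : ℝ) ≤ ((P.length : ℝ) + 2) / (2 * k + 2) := by
  have h : ((2 * eccW G P * (k + 1) : ℕ) : ℝ) ≤ ((P.length + 2 : ℕ) : ℝ) :=
    Nat.cast_le.2 (hP.two_mul_eccW_mul_le hk hG)
  push_cast at h
  rw [le_div_iff₀ (by positivity)]
  linarith
end

section
/- Let G be a k-connected graph on n vertices with k ≥ 2. Then the path eccentricity of G is at most (n + k)/(3k + 2). -/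
open SimpleGraph

variable {V : Type*} [Fintype V] [DecidableEq V]

/-- A form of the fan lemma: if no set of fewer than `k` vertices disconnects `G`, then there are
`k` paths from `u` to `B`, pairwise disjoint except at `u`, meeting `B` only in their last
vertices. The path with index `i` has length `ℓ i` and vertices `p i 0, …, p i (ℓ i)`. -/
theorem exists_fan (G : SimpleGraph V) (k : ℕ)
    (hG : ∀ S : Finset V, S.card < k → (G.induce ((↑S : Set V)ᶜ)).Connected)
    (u : V) (B : Finset V) (hu : u ∉ B) (hB : k ≤ B.card) :
    ∃ (ℓ : Fin k → ℕ) (p : Fin k → ℕ → V), (∀ i, 1 ≤ ℓ i) ∧ (∀ i, p i 0 = u) ∧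
      (∀ i j, j < ℓ i → G.Adj (p i j) (p i (j + 1))) ∧
      (∀ i, p i (ℓ i) ∈ B) ∧ (∀ i j, j < ℓ i → p i j ∉ B) ∧
      (∀ i j, 1 ≤ j → p i j ≠ u) ∧
      (∀ i i' j j', 1 ≤ j → j ≤ ℓ i → 1 ≤ j' → j' ≤ ℓ i' → p i j = p i' j' →
        i = i' ∧ j = j') := by
  classical
  let t : Fin k ⊕ {v // v ∉ B ∧ v ≠ u} → Finset V :=
    Sum.elim (fun _ => Finset.univ.filter fun w => G.Adj u w)
      (fun v => Finset.univ.filter fun w => w ≠ u ∧ (w = v.1 ∨ G.Adj v.1 w))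
  have htu : ∀ x, u ∉ t x := by
    rintro (i | v) <;> simp [t]
  have hall : ∀ s : Finset (Fin k ⊕ {v // v ∉ B ∧ v ≠ u}), s.card ≤ (s.biUnion t).card := by
    intro s
    set W : Finset V := s.toRight.image Subtype.val with hW
    have hWc : W.card = s.toRight.card :=
      Finset.card_image_of_injective _ Subtype.val_injective
    have hmemW : ∀ v, v ∈ W ↔ ∃ h : v ∉ B ∧ v ≠ u, Sum.inr ⟨v, h⟩ ∈ s := by
      intro v; simp [hW]
    have hWT : W ⊆ s.biUnion t := by
      intro v hv
      obtain ⟨h, hs⟩ := (hmemW v).1 hv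
      exact Finset.mem_biUnion.2 ⟨_, hs, by simp [t, h.2]⟩
    have hcard := Finset.card_toLeft_add_card_toRight (u := s)
    rcases s.toLeft.eq_empty_or_nonempty with h0 | ⟨i, hi⟩
    · rw [h0, Finset.card_empty] at hcard
      have := Finset.card_le_card hWT
      omega
    by_contra! hlt
    have hle : s.toLeft.card ≤ k := by simpa using Finset.card_le_univ s.toLeft
    have hS : (s.biUnion t \ W).card < k := by
      rw [Finset.card_sdiff_of_subset hWT]
      have := Finset.card_le_card hWT
      omega
    have hc := hG _ hS
    obtain ⟨b, hb, hbS⟩ := Finset.exists_mem_notMem_of_card_lt_card (hS.trans_le hB)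
    have huS : u ∉ s.biUnion t \ W := by
      intro h
      obtain ⟨x, -, hx⟩ := Finset.mem_biUnion.1 (Finset.mem_sdiff.1 h).1
      exact htu x hx
    have hreach := hc.preconnected ⟨u, by simpa using huS⟩ ⟨b, by simpa using hbS⟩
    rw [SimpleGraph.reachable_iff_reflTransGen] at hreach
    have key : ∀ y, Relation.ReflTransGen
        (G.induce ((↑(s.biUnion t \ W) : Set V)ᶜ)).Adj ⟨u, by simpa using huS⟩ y →
        y.1 = u ∨ y.1 ∈ W := by
      intro y hy
      induction hy with
      | refl => exact Or.inl rfl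
      | @tail y z _ hyz ih =>
        have hadj : G.Adj y.1 z.1 := hyz
        have hz : z.1 ∉ s.biUnion t \ W := by simpa using z.2
        by_cases hzu : z.1 = u
        · exact Or.inl hzu
        refine Or.inr ?_
        by_contra hzW
        refine hz (Finset.mem_sdiff.2 ⟨?_, hzW⟩)
        rcases ih with h | h
        · refine Finset.mem_biUnion.2 ⟨_, Finset.mem_toLeft.1 hi, ?_⟩
          rw [h] at hadj
          simpa [t] using hadj
        · obtain ⟨h', hs⟩ := (hmemW _).1 h
          exact Finset.mem_biUnion.2 ⟨_, hs, by simp [t, hzu, hadj]⟩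
    rcases key _ hreach with h | h
    · exact hu (h ▸ hb)
    · exact ((hmemW _).1 h).1.1 hb
  obtain ⟨f, hf, hft⟩ := (Finset.all_card_le_biUnion_card_iff_exists_injective t).1 hall
  let step : V → V := fun v => if h : v ∉ B ∧ v ≠ u then f (Sum.inr ⟨v, h⟩) else v
  let a : Fin k → ℕ → V := fun i j => step^[j] (f (Sum.inl i))
  have ha0 : ∀ i, a i 0 = f (Sum.inl i) := fun i => rfl
  have hasucc : ∀ i j, a i (j + 1) = step (a i j) := fun i j =>
    Function.iterate_succ_apply' _ _ _
  have hfu : ∀ x, f x ≠ u := fun x h => htu x (h ▸ hft x)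
  have hau : ∀ i j, a i j ≠ u := by
    intro i j
    induction j with
    | zero => exact hfu _
    | succ j ih =>
      rw [hasucc]
      simp only [step]
      split_ifs
      · exact hfu _
      · exact ih
  have hanext : ∀ i j, ∀ h : a i j ∉ B, a i (j + 1) = f (Sum.inr ⟨a i j, h, hau i j⟩) := by
    intro i j h
    rw [hasucc]
    simp only [step]
    rw [dif_pos]
  have hinj : ∀ i i' j j', (∀ m < j, a i m ∉ B) → (∀ m < j', a i' m ∉ B) → a i j = a i' j' →
      i = i' ∧ j = j' := by
    intro i i' j
    induction j with
    | zero =>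
      intro j' _ h' he
      cases j' with
      | zero => exact ⟨Sum.inl_injective (hf he), rfl⟩
      | succ j' =>
        rw [hanext i' j' (h' _ (by omega)), ha0] at he
        exact absurd (hf he) (by simp)
    | succ j ih =>
      intro j' h h' he
      rw [hanext i j (h _ (by omega))] at he
      cases j' with
      | zero => exact absurd (hf he) (by simp)
      | succ j' =>
        rw [hanext i' j' (h' _ (by omega))] at he
        have := congrArg Subtype.val (Sum.inr_injective (hf he))
        obtain ⟨h1, h2⟩ := ih j' (fun m hm => h m (by omega)) (fun m hm => h' m (by omega)) this
        exact ⟨h1, by omega⟩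
  have hex : ∀ i, ∃ j, a i j ∈ B := by
    intro i
    by_contra! h
    exact not_injective_infinite_finite (a i)
      fun j j' he => (hinj i i j j' (fun m _ => h m) (fun m _ => h m) he).2
  let p : Fin k → ℕ → V := fun i j => Nat.casesOn j u (a i)
  refine ⟨fun i => Nat.find (hex i) + 1, p, fun i => Nat.le_add_left _ _, fun i => rfl, ?_,
    fun i => Nat.find_spec (hex i), ?_, ?_, ?_⟩
  · intro i j hj
    beta_reduce at hj
    cases j with
    | zero =>
      change G.Adj u (f (Sum.inl i))
      simpa [t] using hft (Sum.inl i)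
    | succ j =>
      change G.Adj (a i j) (a i (j + 1))
      have hjB : a i j ∉ B := Nat.find_min (hex i) (by omega)
      have := hft (Sum.inr ⟨a i j, hjB, hau i j⟩)
      rw [← hanext i j hjB] at this
      simp only [t, Sum.elim_inr, Finset.mem_filter] at this
      rcases this.2.2 with h | h
      · have := (hinj i i _ _ (fun m hm => Nat.find_min (hex i) (by omega))
          (fun m hm => Nat.find_min (hex i) (by omega)) h).2
        omega
      · exact h
  · intro i j hj
    beta_reduce at hj
    cases j with
    | zero => exact hu
    | succ j => exact Nat.find_min (hex i) (by omega)
  · intro i j hj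
    cases j with
    | zero => omega
    | succ j => exact hau i j
  · intro i i' j j' h1 h2 h1' h2' he
    beta_reduce at h2 h2'
    obtain ⟨j, rfl⟩ := Nat.exists_eq_add_of_le' h1
    obtain ⟨j', rfl⟩ := Nat.exists_eq_add_of_le' h1'
    obtain ⟨h, h'⟩ := hinj i i' j j' (fun m hm => Nat.find_min (hex i) (by omega))
      (fun m hm => Nat.find_min (hex i') (by omega)) he
    exact ⟨h, by omega⟩

/-- In a graph that stays connected after deleting fewer than `k` vertices, every longest path
has at least `k` vertices. -/
theorem le_length_of_maximal (G : SimpleGraph V) (k : ℕ) (hG : KConnected k G)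
    (l : List V) (hne : l ≠ []) (hc : l.IsChain G.Adj)
    (hn : l.Nodup)
    (hmax : ∀ l' : List V, l'.IsChain G.Adj → l'.Nodup → l'.length ≤ l.length) :
    k ≤ l.length := by
  classical
  obtain ⟨x, m, rfl⟩ := List.exists_cons_of_ne_nil hne
  have hnb : ∀ y, G.Adj x y → y ∈ m := by
    intro y hy
    by_contra hym
    have := hmax (y :: x :: m) (List.isChain_cons_cons.2 ⟨hy.symm, hc⟩)
      (List.nodup_cons.2 ⟨by simp [hym, hy.ne'], hn⟩)
    simp at this
  by_contra! hlt
  simp only [List.length_cons] at hlt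
  have hmc : m.toFinset.card < k := (List.toFinset_card_le m).trans_lt (by omega)
  obtain ⟨z, -, hz⟩ : ∃ z ∈ (Finset.univ : Finset V), z ∉ insert x m.toFinset := by
    apply Finset.exists_mem_notMem_of_card_lt_card
    have := Finset.card_insert_le x m.toFinset
    have := hG.1
    rw [Finset.card_univ]
    omega
  simp only [Finset.mem_insert, List.mem_toFinset, not_or] at hz
  have hxm : x ∉ m := (List.nodup_cons.1 hn).1
  have hr := (hG.2 _ hmc).preconnected ⟨x, by simpa using hxm⟩ ⟨z, by simpa using hz.2⟩
  rw [SimpleGraph.reachable_iff_reflTransGen] at hr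
  rcases Relation.ReflTransGen.cases_head hr with h | ⟨y, hy, -⟩
  · exact hz.1 (congrArg Subtype.val h).symm
  · exact y.2 (by simpa using hnb y.1 hy)

/-- The vertices of a walk that descends from `p (a - 1)` to `p 1`, passes through `u` and
ascends from `q 1` to `q (b - 1)`. -/
def bridge {α : Type*} (u : α) (p q : ℕ → α) (a b : ℕ) : List α :=
  ((List.range (a - 1)).map fun m => p (m + 1)).reverse ++
    u :: (List.range (b - 1)).map fun m => q (m + 1)

theorem length_bridge {α : Type*} (u : α) (p q : ℕ → α) {a b : ℕ} (ha : 1 ≤ a) (hb : 1 ≤ b) :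
    (bridge u p q a b).length + 1 = a + b := by
  simp [bridge]
  omega

theorem isChain_map_range_succ {α : Type*} (G : SimpleGraph α) (p : ℕ → α) (a : ℕ)
    (hp : ∀ j < a, G.Adj (p j) (p (j + 1))) :
    (p 0 :: (List.range a).map fun m => p (m + 1)).IsChain G.Adj := by
  have : (p 0 :: (List.range a).map fun m => p (m + 1)) = (List.range (a + 1)).map p := by
    simp [List.range_succ_eq_map, Function.comp_def]
  rw [this, List.isChain_map, List.isChain_range_succ]
  exact hp

theorem isChain_bridge {α : Type*} (G : SimpleGraph α) (u : α) (p q : ℕ → α) {a b : ℕ}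
    (ha : 1 ≤ a) (hb : 1 ≤ b) (hp0 : p 0 = u) (hq0 : q 0 = u)
    (hp : ∀ j < a, G.Adj (p j) (p (j + 1))) (hq : ∀ j < b, G.Adj (q j) (q (j + 1))) :
    (p a :: (bridge u p q a b ++ [q b])).IsChain G.Adj := by
  obtain ⟨a, rfl⟩ := Nat.exists_eq_add_of_le' ha
  obtain ⟨b, rfl⟩ := Nat.exists_eq_add_of_le' hb
  have heq : p (a + 1) :: (bridge u p q (a + 1) (b + 1) ++ [q (b + 1)]) =
      ((List.range (a + 1)).map fun m => p (m + 1)).reverse ++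
        u :: (List.range (b + 1)).map fun m => q (m + 1) := by
    simp [bridge, List.range_succ]
  rw [heq, List.isChain_split]
  constructor
  · rw [← List.reverse_cons, List.isChain_reverse, ← hp0]
    exact (isChain_map_range_succ G p _ hp).imp fun _ _ h => h.symm
  · rw [← hq0]
    exact isChain_map_range_succ G q _ hq

/-- Replacing the part of a longest path strictly between two of its vertices by a detour. -/
theorem detour_le {α : Type*} (G : SimpleGraph α) (l : List α) (hc : l.IsChain G.Adj)
    (hn : l.Nodup)
    (hmax : ∀ l' : List α, l'.IsChain G.Adj → l'.Nodup → l'.length ≤ l.length)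
    (D : List α) (hD : D.Nodup) (hdisj : ∀ v ∈ D, v ∉ l) (s t : ℕ) (hst : s < t)
    (ht : t < l.length) (h : (l[s] :: (D ++ [l[t]])).IsChain G.Adj) :
    D.length + s + 1 ≤ t := by
  have h1 : l.take (s + 1) = l.take s ++ [l[s]] := (List.take_concat_get' l s _).symm
  have h2 : l.drop t = l[t] :: l.drop (t + 1) := List.drop_eq_getElem_cons ht
  have hlen := hmax (l.take (s + 1) ++ (D ++ l.drop t)) (by
    rw [h1, h2, List.append_assoc, List.singleton_append, List.isChain_split, ← h1,
      ← List.cons_append, List.isChain_split, ← h2]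
    exact ⟨hc.take _, h, hc.drop _⟩) (by
    rw [List.nodup_append', List.nodup_append', List.disjoint_append_right]
    exact ⟨hn.sublist (List.take_sublist _ _), ⟨hD, hn.sublist (List.drop_sublist _ _),
      fun v hv hv' => hdisj v hv (List.mem_of_mem_drop hv')⟩,
      fun v hv hv' => hdisj v hv' (List.mem_of_mem_take hv),
      List.disjoint_take_drop hn (by omega)⟩)
  simp only [List.length_append, List.length_take, List.length_drop] at hlen
  omega

/-- Replacing the beginning of a longest path. -/
theorem detour_le_left {α : Type*} (G : SimpleGraph α) (l : List α) (hc : l.IsChain G.Adj)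
    (hn : l.Nodup)
    (hmax : ∀ l' : List α, l'.IsChain G.Adj → l'.Nodup → l'.length ≤ l.length)
    (D : List α) (hD : D.Nodup) (hdisj : ∀ v ∈ D, v ∉ l) (t : ℕ)
    (ht : t < l.length) (h : (D ++ [l[t]]).IsChain G.Adj) :
    D.length ≤ t := by
  have h2 : l.drop t = l[t] :: l.drop (t + 1) := List.drop_eq_getElem_cons ht
  have hlen := hmax (D ++ l.drop t) (by
    rw [h2, List.isChain_split, ← h2]
    exact ⟨h, hc.drop _⟩) (by
    rw [List.nodup_append']
    exact ⟨hD, hn.sublist (List.drop_sublist _ _),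
      fun v hv hv' => hdisj v hv (List.mem_of_mem_drop hv')⟩)
  simp only [List.length_append, List.length_drop] at hlen
  omega

/-- Replacing the end of a longest path. -/
theorem detour_le_right {α : Type*} (G : SimpleGraph α) (l : List α) (hc : l.IsChain G.Adj)
    (hn : l.Nodup)
    (hmax : ∀ l' : List α, l'.IsChain G.Adj → l'.Nodup → l'.length ≤ l.length)
    (D : List α) (hD : D.Nodup) (hdisj : ∀ v ∈ D, v ∉ l) (s : ℕ)
    (hs : s < l.length) (h : (l[s] :: D).IsChain G.Adj) :
    D.length + s + 1 ≤ l.length := by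
  have h1 : l.take (s + 1) = l.take s ++ [l[s]] := (List.take_concat_get' l s _).symm
  have hlen := hmax (l.take (s + 1) ++ D) (by
    rw [h1, List.append_assoc, List.singleton_append, List.isChain_split, ← h1]
    exact ⟨hc.take _, h⟩) (by
    rw [List.nodup_append']
    exact ⟨hn.sublist (List.take_sublist _ _), hD,
      fun v hv hv' => hdisj v hv' (List.mem_of_mem_take hv)⟩)
  simp only [List.length_append, List.length_take] at hlen
  omega

/-- If natural numbers `t i`, `i < k`, have pairwise distance at least `m` and lie between `c` and
`N - c`, then `(k - 1) * m + 2 * c ≤ N`. -/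
theorem mul_add_le_of_separated {k : ℕ} (hk : 1 ≤ k) (t : Fin k → ℕ) (m c N : ℕ) (hm : 0 < m)
    (hlow : ∀ i, c ≤ t i) (hup : ∀ i, t i + c ≤ N)
    (hsep : ∀ i j, i ≠ j → t i + m ≤ t j ∨ t j + m ≤ t i) :
    (k - 1) * m + 2 * c ≤ N := by
  have hinj : Function.Injective fun i => (t i - c) / m := by
    intro i j hij
    by_contra hne
    have key : ∀ i j, t i + m ≤ t j → (t i - c) / m < (t j - c) / m := by
      intro i j h
      have := hlow i
      calc (t i - c) / m < (t i - c) / m + 1 := Nat.lt_succ_self _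
        _ = (t i - c + m) / m := (Nat.add_div_right _ hm).symm
        _ ≤ (t j - c) / m := Nat.div_le_div_right (by omega)
    rcases hsep i j hne with h | h
    · exact (key i j h).ne hij
    · exact (key j i h).ne' hij
  have hc : k ≤ (N - 2 * c) / m + 1 := by
    have := Finset.card_le_card_of_injOn (s := Finset.univ)
      (t := Finset.range ((N - 2 * c) / m + 1)) (fun i => (t i - c) / m) (fun i _ => by
        have := hup i
        simp only [Finset.coe_range, Set.mem_Iio]
        exact Nat.lt_succ_of_le (Nat.div_le_div_right (by omega))) hinj.injOn
    simpa using this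
  have h1 : (k - 1) * m ≤ N - 2 * c :=
    (Nat.mul_le_mul_right m (by omega)).trans (Nat.div_mul_le_self (N - 2 * c) m)
  have := hlow ⟨0, hk⟩
  have := hup ⟨0, hk⟩
  omega

theorem stmt5 (G : SimpleGraph V) (k : ℕ) (hk : 2 ≤ k) (hG : KConnected k G) :
    (pe G : ℝ) ≤ ((Fintype.card V : ℝ) + k) / (3 * k + 2) := by
  rw [le_div_iff₀ (by positivity)]
  suffices h : pe G * (3 * k + 2) ≤ Fintype.card V + k by exact_mod_cast h
  have : Nonempty V := Fintype.card_pos_iff.1 (by have := hG.1; omega)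
  obtain ⟨x, y, P, hP, hPmax⟩ := Walk.exists_isPath_forall_isPath_length_le_length G
  have hpe : pe G ≤ eccW G P := Nat.sInf_le ⟨x, y, P, hP, rfl⟩
  refine (Nat.mul_le_mul_right _ hpe).trans ?_
  set d := eccW G P with hd
  obtain ⟨u, -, hu⟩ := Finset.exists_mem_eq_sup Finset.univ Finset.univ_nonempty (walkDist G P)
  have hdist : ∀ v ∈ P.support, d ≤ G.dist u v := fun v hv => by
    rw [hd, eccW, hu]
    exact Finset.inf'_le _ (List.mem_toFinset.2 hv)
  rcases Nat.eq_zero_or_pos d with h0 | hdpos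
  · simp [h0]
  have hmax : ∀ l' : List V, l'.IsChain G.Adj → l'.Nodup → l'.length ≤ P.support.length := by
    intro l' hc hn
    rcases eq_or_ne l' [] with rfl | hne
    · simp
    have := hPmax _ _ (Walk.ofSupport l' hne hc)
      (Walk.isPath_def _ |>.2 (by rwa [Walk.support_ofSupport]))
    rw [Walk.length_ofSupport] at this
    rw [Walk.length_support]
    omega
  have hc := P.isChain_adj_support
  have hn := hP.support_nodup
  have hkl := le_length_of_maximal G k hG _ P.support_ne_nil hc hn hmax
  generalize P.support = l at *
  have hul : u ∉ l := fun h => by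
    have := hdist u h
    rw [SimpleGraph.dist_self] at this
    omega
  obtain ⟨ℓ, p, hℓ, hp0, hadj, hend, hnot, hpu, hinj⟩ := exists_fan G k hG.2 u l.toFinset
    (by simpa using hul) (by rwa [List.toFinset_card_of_nodup hn])
  simp only [List.mem_toFinset] at hend hnot
  have hwalk : ∀ i j, j ≤ ℓ i → ∃ W : G.Walk u (p i j), W.length = j := by
    intro i j
    induction j with
    | zero => exact fun _ => ⟨Walk.nil.copy rfl (hp0 i).symm, by simp⟩
    | succ j ih =>
      intro hj
      obtain ⟨W, hW⟩ := ih (by omega)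
      exact ⟨W.concat (hadj i j (by omega)), by simp [hW]⟩
  have hdℓ : ∀ i, d ≤ ℓ i := fun i => by
    obtain ⟨W, hW⟩ := hwalk i _ le_rfl
    exact (hdist _ (hend i)).trans ((SimpleGraph.dist_le W).trans hW.le)
  have hDlen := fun i j => length_bridge u (p i) (p j) (hℓ i) (hℓ j)
  have hDchain := fun i j => isChain_bridge G u (p i) (p j) (hℓ i) (hℓ j) (hp0 i) (hp0 j)
    (hadj i) (hadj j)
  have hDl : ∀ i j, ∀ v ∈ bridge u (p i) (p j) (ℓ i) (ℓ j), v ∉ l := by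
    intro i j v hv
    simp only [bridge, List.mem_append, List.mem_reverse, List.mem_map, List.mem_range,
      List.mem_cons] at hv
    rcases hv with ⟨m, hm, rfl⟩ | rfl | ⟨m, hm, rfl⟩
    · exact hnot i _ (by omega)
    · exact hul
    · exact hnot j _ (by omega)
  have hseg : ∀ i, ((List.range (ℓ i - 1)).map fun m => p i (m + 1)).Nodup := by
    intro i
    refine List.Nodup.map_on ?_ List.nodup_range
    intro m hm m' hm' h
    rw [List.mem_range] at hm hm'
    have := (hinj i i _ _ (by omega) (by omega) (by omega) (by omega) h).2
    omega
  have hDnodup : ∀ i j, i ≠ j → (bridge u (p i) (p j) (ℓ i) (ℓ j)).Nodup := by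
    intro i j hij
    rw [bridge, List.nodup_append', List.nodup_reverse, List.nodup_cons]
    refine ⟨hseg i, ⟨?_, hseg j⟩, ?_⟩
    · rw [List.mem_map]
      rintro ⟨m, -, hm⟩
      exact hpu j _ (by omega) hm
    · intro v hv hv'
      simp only [List.mem_reverse, List.mem_map, List.mem_range, List.mem_cons] at hv hv'
      obtain ⟨m, hm, rfl⟩ := hv
      rcases hv' with h | ⟨m', hm', h⟩
      · exact hpu i _ (by omega) h
      · exact hij (hinj j i _ _ (by omega) (by omega) (by omega) (by omega) h).1.symm
  choose t ht htl using fun i => List.getElem_of_mem (hend i)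
  have hgap : ∀ i j, i ≠ j → t i < t j → t i + 2 * d ≤ t j := by
    intro i j hij hlt
    have := detour_le G l hc hn hmax _ (hDnodup i j hij) (hDl i j) (t i) (t j) hlt (ht j)
      (by rw [htl, htl]; exact hDchain i j)
    have := hDlen i j
    have := hdℓ i
    have := hdℓ j
    omega
  have : Nontrivial (Fin k) := Fin.nontrivial_iff_two_le.2 hk
  have hlow : ∀ i, 2 * d - 1 ≤ t i := by
    intro i
    obtain ⟨j, hj⟩ := exists_ne i
    have := detour_le_left G l hc hn hmax _ (hDnodup j i hj) (hDl j i) (t i) (ht i)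
      (by rw [htl]; exact (hDchain j i).tail)
    have := hDlen j i
    have := hdℓ i
    have := hdℓ j
    omega
  have hup : ∀ i, t i + (2 * d - 1) ≤ l.length - 1 := by
    intro i
    obtain ⟨j, hj⟩ := exists_ne i
    have := detour_le_right G l hc hn hmax _ (hDnodup i j hj.symm) (hDl i j) (t i) (ht i)
      (by rw [htl]; exact (List.cons_append ▸ hDchain i j :
        ((p i (ℓ i) :: bridge u (p i) (p j) (ℓ i) (ℓ j)) ++ _).IsChain G.Adj).left_of_append)
    have := hDlen i j
    have := hdℓ i
    have := hdℓ j
    omega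
  have hsep := mul_add_le_of_separated (by omega) t (2 * d) (2 * d - 1) (l.length - 1)
    (by omega) hlow hup fun i j hij => by
      have hne : t i ≠ t j := fun h => by
        have he : p i (ℓ i) = p j (ℓ j) := by
          rw [← htl i, ← htl j]
          simp only [h]
        exact hij (hinj i j _ _ (hℓ i) le_rfl (hℓ j) le_rfl he).1
      rcases hne.lt_or_gt with h | h
      · exact Or.inl (hgap i j hij h)
      · exact Or.inr (hgap j i hij.symm h)
  have hcount : k * (d - 1) + (l.length + 1) ≤ Fintype.card V := by
    let g : Fin k × Fin (d - 1) → V := fun x => p x.1 (x.2 + 1)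
    have hg : Function.Injective g := by
      rintro ⟨i, m⟩ ⟨j, m'⟩ h
      have := hdℓ i
      have := hdℓ j
      obtain ⟨h1, h2⟩ := hinj i j _ _ (by omega) (by omega) (by omega) (by omega) h
      exact Prod.ext h1 (Fin.ext (by simpa using h2))
    have hdisj : Disjoint (Finset.univ.image g) (insert u l.toFinset) := by
      rw [Finset.disjoint_left]
      intro v hv hv'
      obtain ⟨⟨i, m⟩, -, rfl⟩ := Finset.mem_image.1 hv
      have := hdℓ i
      rcases Finset.mem_insert.1 hv' with h | h
      · exact hpu i _ (by omega) h
      · exact hnot i _ (by omega) (List.mem_toFinset.1 h)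
    have := Finset.card_le_univ (Finset.univ.image g ∪ insert u l.toFinset)
    rwa [Finset.card_union_of_disjoint hdisj, Finset.card_image_of_injective _ hg,
      Finset.card_insert_of_notMem (by simpa using hul), List.toFinset_card_of_nodup hn,
      Finset.card_univ, Fintype.card_prod, Fintype.card_fin, Fintype.card_fin] at this
  obtain ⟨e, he⟩ := Nat.exists_eq_add_of_le' hdpos
  obtain ⟨r, rfl⟩ := Nat.exists_eq_add_of_le' hk
  rw [he] at hsep hcount ⊢
  simp only [Nat.add_sub_cancel] at hcount
  have h1 : r + 2 - 1 = r + 1 := rfl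
  rw [h1] at hsep
  ring_nf at hsep hcount ⊢
  omega
end

section
/- Let G be a connected bipartite permutation graph without a Hamiltonian path. Then every longest path of G is a dominating path, and hence every longest path is a central path. -/
open SimpleGraph

variable {V : Type*} [Fintype V] [DecidableEq V]

/-- `G` is a permutation graph: there are two linear orders (realized by injections
into `ℝ`) such that distinct vertices are adjacent iff the two orders disagree on them. -/
def IsPermutationGraph {W : Type*} (G : SimpleGraph W) : Prop :=
  ∃ f g : W → ℝ, Function.Injective f ∧ Function.Injective g ∧
    ∀ u v : W, G.Adj u v ↔ u ≠ v ∧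
      ((f u < f v ∧ g v < g u) ∨ (f v < f u ∧ g u < g v))

/-- A two-coloured graph is strongly ordered by `r` if, inside each colour class, crossing edges
can be uncrossed and neighbourhoods are intervals. -/
structure StronglyOrdered {W : Type*} (G : SimpleGraph W) (c : W → Bool) (r : W → ℝ) : Prop where
  injective : Function.Injective r
  color_ne : ∀ {u v}, G.Adj u v → c u ≠ c v
  cross : ∀ {a a' b b'}, c a = c a' → c b = c b' → r a < r a' → r b < r b' →
    G.Adj a b' → G.Adj a' b → G.Adj a b ∧ G.Adj a' b'
  interval : ∀ {a b b' b''}, c b = c b' → c b' = c b'' → r b < r b' → r b' < r b'' →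
    G.Adj a b → G.Adj a b'' → G.Adj a b'

namespace StronglyOrdered

variable {W : Type*} {G : SimpleGraph W} {c : W → Bool} {r : W → ℝ}

theorem neg (h : StronglyOrdered G c r) : StronglyOrdered G c (fun v ↦ - r v) where
  injective := neg_injective.comp h.injective
  color_ne := h.color_ne
  cross ha hb hra hrb h1 h2 :=
    (h.cross ha.symm hb.symm (neg_lt_neg_iff.1 hra) (neg_lt_neg_iff.1 hrb) h2 h1).symm
  interval h1 h2 hr1 hr2 ha hb :=
    h.interval h2.symm h1.symm (neg_lt_neg_iff.1 hr2) (neg_lt_neg_iff.1 hr1) hb ha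

theorem lt_of_le_of_ne (h : StronglyOrdered G c r) {u v : W} (hr : r u ≤ r v) (hne : u ≠ v) :
    r u < r v :=
  hr.lt_of_ne fun e ↦ hne (h.injective e)

/-- Two largest vertices of opposite colours on a path can be removed from it, reversing the
segment between them. -/
theorem isChain_remove_max (h : StronglyOrdered G c r) {p q : W} {L M R : List W}
    (hc : c p ≠ c q) (hnd : (L ++ p :: (M ++ q :: R)).Nodup)
    (hch : (L ++ p :: (M ++ q :: R)).IsChain G.Adj)
    (hp : ∀ v ∈ L ++ p :: (M ++ q :: R), c v = c p → r v ≤ r p)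
    (hq : ∀ v ∈ L ++ p :: (M ++ q :: R), c v = c q → r v ≤ r q) :
    (L ++ (M.reverse ++ R)).IsChain G.Adj := by
  have key : ∀ z x, z ∈ L ++ (M ++ R) → x ∈ L ++ (M ++ R) → G.Adj z p → G.Adj q x →
      G.Adj z x := by
    intro z x hz hx hzp hxq
    have hzc := h.color_ne hzp
    have hxc := h.color_ne hxq
    have h1 : c z = c q := by cases hh : c z <;> cases hh' : c q <;> cases hh'' : c p <;> simp_all
    have h2 : c x = c p := by cases hh : c x <;> cases hh' : c q <;> cases hh'' : c p <;> simp_all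
    have hzq : z ≠ q := by rintro rfl; grind
    have hxp : x ≠ p := by rintro rfl; grind
    exact (h.cross h1 h2 (h.lt_of_le_of_ne (hq z (by grind) h1) hzq)
      (h.lt_of_le_of_ne (hp x (by grind) h2) hxp) hzp hxq).1
  clear hp hq
  simp only [List.isChain_append, List.isChain_cons, List.isChain_reverse] at hch ⊢
  obtain ⟨hL, ⟨hpM, hM, ⟨hqR, hR⟩, hMq⟩, hLp⟩ := hch
  have hM' : M.IsChain (fun a b ↦ G.Adj b a) := hM.imp fun _ _ e ↦ e.symm
  refine ⟨hL, ⟨hM', hR, ?_⟩, ?_⟩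
  · intro x hx y hy
    have hxM : x ∈ M.head? := by simpa using hx
    have hxp := (hpM x (by grind)).symm
    exact key x y (by grind) (by grind) hxp (hqR y hy)
  · intro x hx y hy
    have hxL : x ∈ L := List.mem_of_getLast? hx
    have hxp : G.Adj x p := hLp x hx p (by simp)
    rcases M.eq_nil_or_concat with rfl | ⟨M', m, rfl⟩
    · exact key x y (by grind) (by grind) hxp (hqR y (by simpa using hy))
    · have : y = m := by simpa [eq_comm] using hy
      subst this
      exact key x y (by grind) (by grind) hxp (hMq y (by simp) q (by simp)).symm

/-- The head of `l` and its successor are both largest in their colour classes within `l`. -/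
def HeadsMax (c : W → Bool) (r : W → ℝ) (l : List W) : Prop :=
  ∃ e t, l = e :: t ∧ (∀ v ∈ l, c v = c e → r v ≤ r e) ∧
    ∀ d ∈ t.head?, ∀ v ∈ l, c v = c d → r v ≤ r d

theorem exists_adj_of_mem {l : List W} (hch : l.IsChain G.Adj) (hlen : 2 ≤ l.length) {v : W}
    (hv : v ∈ l) : ∃ w ∈ l, G.Adj v w := by
  obtain ⟨L, R, rfl⟩ := List.append_of_mem hv
  rcases R with _ | ⟨w, R⟩
  · rcases L.eq_nil_or_concat with rfl | ⟨L', w, rfl⟩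
    · simp at hlen
    · refine ⟨w, by simp, ?_⟩
      have := (List.isChain_append.1 hch).2.2 w (by simp) v (by simp)
      exact this.symm
  · exact ⟨w, by simp, (List.isChain_cons_cons.1 (List.isChain_append.1 hch).2.1).1⟩

theorem exists_max_color {l : List W} (c : W → Bool) (r : W → ℝ) {w : W} (hw : w ∈ l) :
    ∃ p ∈ l, c p = c w ∧ ∀ v ∈ l, c v = c w → r v ≤ r p := by
  classical
  obtain ⟨p, hp, hmax⟩ := (l.toFinset.filter (c · = c w)).exists_max_image r ⟨w, by simp [hw]⟩
  simp only [Finset.mem_filter, List.mem_toFinset] at hp hmax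
  exact ⟨p, hp.1, hp.2, fun v hv hc ↦ hmax v ⟨hv, hc⟩⟩

/-- A vertex `q` is adjacent to every vertex lying between two of its neighbours `x` and `p`. -/
theorem adj_of_le (h : StronglyOrdered G c r) {e p q x : W} (hqx : G.Adj q x) (hqp : G.Adj q p)
    (hce : c e = c p) (hxe : r x ≤ r e) (hep : r e < r p) : G.Adj q e := by
  have hcx : c x = c p := by
    have h1 := h.color_ne hqx
    have h2 := h.color_ne hqp
    cases hh : c x <;> cases hh' : c q <;> cases hh'' : c p <;> simp_all
  by_cases hx : x = e
  · exact hx ▸ hqx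
  · exact h.interval (hcx.trans hce.symm) hce (h.lt_of_le_of_ne hxe hx) hep hqx hqp

theorem HeadsMax.cons_cons (h : StronglyOrdered G c r) {p q x e : W} {t l : List W}
    (hc : c p ≠ c q) (hpq : G.Adj p q) (hperm : (p :: q :: e :: t).Perm l) (hnd : l.Nodup)
    (hp : ∀ v ∈ l, c v = c p → r v ≤ r p) (hq : ∀ v ∈ l, c v = c q → r v ≤ r q)
    (he : ∀ v ∈ e :: t, c v = c e → r v ≤ r e) (hce : c e = c p)
    (hch : (e :: t).IsChain G.Adj) (hx : x ∈ e :: t) (hqx : G.Adj q x) :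
    ∃ l' : List W, l'.Perm l ∧ l'.IsChain G.Adj ∧ HeadsMax c r l' := by
  have hcx : c x = c p := by
    have h1 := h.color_ne hqx
    cases hh : c x <;> cases hh' : c q <;> cases hh'' : c p <;> simp_all
  have hep : e ≠ p := by
    have := hperm.nodup_iff.2 hnd
    rintro rfl
    simp at this
  have hqe : G.Adj q e := h.adj_of_le hqx hpq.symm hce (he x hx (hcx.trans hce.symm))
    (h.lt_of_le_of_ne (hp e (hperm.subset (by simp)) hce) hep)
  refine ⟨_, hperm, ?_, p, q :: e :: t, rfl, fun v hv ↦ hp v (hperm.subset hv), ?_⟩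
  · exact .cons_cons hpq (.cons_cons hqe hch)
  · intro d hd v hv
    obtain rfl : q = d := by simpa using hd
    exact hq v (hperm.subset hv)

/-- The vertices of a path can be rearranged into a path that starts with the largest vertex of
one colour class, followed by the largest vertex of the other. -/
theorem exists_perm_headsMax (h : StronglyOrdered G c r) (l : List W) (hne : l ≠ [])
    (hnd : l.Nodup) (hch : l.IsChain G.Adj) :
    ∃ l' : List W, l'.Perm l ∧ l'.IsChain G.Adj ∧ HeadsMax c r l' := by
  induction hn : l.length using Nat.strong_induction_on generalizing l with
  | _ n ih =>
  subst hn
  rcases Nat.lt_or_ge l.length 2 with hlt | hlen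
  · obtain ⟨e, rfl⟩ : ∃ e, l = [e] := by
      rw [← List.length_eq_one_iff]
      have := List.length_pos_iff.2 hne
      omega
    exact ⟨[e], .rfl, hch, e, [], rfl, by simp, by simp⟩
  have main : ∀ p q L M R, l = L ++ p :: (M ++ q :: R) → c p ≠ c q →
      (∀ v ∈ l, c v = c p → r v ≤ r p) → (∀ v ∈ l, c v = c q → r v ≤ r q) →
      ∃ l' : List W, l'.Perm l ∧ l'.IsChain G.Adj ∧ HeadsMax c r l' := by
    intro p q L M R hl hc hp hq
    have hpq : G.Adj p q := by
      obtain ⟨q', hq', hpq'⟩ := exists_adj_of_mem hch hlen (v := p) (by simp [hl])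
      obtain ⟨p', hp', hqp'⟩ := exists_adj_of_mem hch hlen (v := q) (by simp [hl])
      have h1 := h.color_ne hpq'
      have h2 := h.color_ne hqp'
      have hcq : c q' = c q := by
        cases hh : c q' <;> cases hh' : c q <;> cases hh'' : c p <;> simp_all
      have hcp : c p' = c p := by
        cases hh : c p' <;> cases hh' : c q <;> cases hh'' : c p <;> simp_all
      by_cases hqq : q' = q
      · exact hqq ▸ hpq'
      by_cases hpp : p' = p
      · exact (hpp ▸ hqp').symm
      exact (h.cross hcp hcq (h.lt_of_le_of_ne (hp _ hp' hcp) hpp)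
        (h.lt_of_le_of_ne (hq _ hq' hcq) hqq) hqp'.symm hpq').2
    by_cases hLM : L = [] ∧ M = []
    · obtain ⟨rfl, rfl⟩ := hLM
      refine ⟨l, .rfl, hch, p, q :: R, by simpa using hl, hp, ?_⟩
      simpa using hq
    by_cases hMR : M = [] ∧ R = []
    · obtain ⟨rfl, rfl⟩ := hMR
      refine ⟨l.reverse, l.reverse_perm, ?_, q, p :: L.reverse, by simp [hl], by simpa using hq, ?_⟩
      · rw [List.isChain_reverse]
        exact hch.imp fun _ _ e ↦ e.symm
      · simpa using hp
    have hrem := h.isChain_remove_max hc (hl ▸ hnd) (hl ▸ hch) (hl ▸ hp) (hl ▸ hq)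
    have hpermQ : (L ++ (M.reverse ++ R)).Perm (L ++ (M ++ R)) :=
      (M.reverse_perm.append_right R).append_left L
    have hperm : (p :: q :: (L ++ (M ++ R))).Perm l := by
      rw [hl]
      refine .trans ?_ List.perm_middle.symm
      refine .cons _ ?_
      rw [← List.append_assoc, ← List.append_assoc]
      exact List.perm_middle.symm
    have hndQ : (L ++ (M ++ R)).Nodup := by
      have := hperm.nodup_iff.2 hnd
      grind
    obtain ⟨l'', hperm'', hch'', e, t, rfl, he, -⟩ := ih (L ++ (M.reverse ++ R)).length
      (by rw [hpermQ.length_eq, ← hperm.length_eq]; simp) _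
      (by simp; tauto) (hpermQ.nodup_iff.2 hndQ) hrem rfl
    have hpermE : (e :: t).Perm (L ++ (M ++ R)) := hperm''.trans hpermQ
    have hperm1 : (p :: q :: e :: t).Perm l := ((hpermE.cons q).cons p).trans hperm
    have hperm2 : (q :: p :: e :: t).Perm l := (List.Perm.swap p q _).trans hperm1
    rw [hl] at hch
    simp only [List.isChain_append, List.isChain_cons] at hch
    obtain ⟨-, ⟨hpM, -, ⟨hqR, -⟩, hMq⟩, hLp⟩ := hch
    have hcase : c e = c p ∨ c e = c q := by
      cases hh : c e <;> cases hh' : c q <;> cases hh'' : c p <;> simp_all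
    rcases hcase with hce | hce
    · obtain ⟨x, hx, hqx⟩ : ∃ x ∈ L ++ (M ++ R), G.Adj q x := by
        rcases M.eq_nil_or_concat with rfl | ⟨M', m, rfl⟩
        · rcases R with _ | ⟨m, R⟩
          · simp at hMR
          · exact ⟨m, by simp, hqR m (by simp)⟩
        · exact ⟨m, by simp, (hMq m (by simp) q (by simp)).symm⟩
      exact HeadsMax.cons_cons h hc hpq hperm1 hnd hp hq he hce hch'' (hpermE.symm.subset hx) hqx
    · obtain ⟨x, hx, hpx⟩ : ∃ x ∈ L ++ (M ++ R), G.Adj p x := by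
        rcases M with _ | ⟨m, M⟩
        · rcases L.eq_nil_or_concat with rfl | ⟨L', m, rfl⟩
          · simp at hLM
          · exact ⟨m, by simp, (hLp m (by simp) p (by simp)).symm⟩
        · exact ⟨m, by simp, hpM m (by simp)⟩
      exact HeadsMax.cons_cons h hc.symm hpq.symm hperm2 hnd hq hp he hce hch''
        (hpermE.symm.subset hx) hpx
  obtain ⟨v, hv⟩ := List.exists_mem_of_ne_nil l hne
  obtain ⟨w, hw, hvw⟩ := exists_adj_of_mem hch hlen hv
  obtain ⟨p, hpl, hcp, hp⟩ := exists_max_color c r hv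
  obtain ⟨q, hql, hcq, hq⟩ := exists_max_color c r hw
  have hc : c p ≠ c q := by rw [hcp, hcq]; exact h.color_ne hvw
  rw [← hcp] at hp
  rw [← hcq] at hq
  obtain ⟨L, R, hl⟩ := List.append_of_mem hpl
  have hq' : q ∈ L ∨ q ∈ R := by
    have : q ≠ p := fun e ↦ hc (by rw [e])
    rw [hl] at hql
    simpa [this] using hql
  rcases hq' with hq' | hq'
  · obtain ⟨L₁, L₂, rfl⟩ := List.append_of_mem hq'
    exact main q p L₁ L₂ R (by simpa using hl) hc.symm hq hp
  · obtain ⟨R₁, R₂, rfl⟩ := List.append_of_mem hq'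
    exact main p q L R₁ R₂ hl hc hp hq

/-- If an edge `u w` misses the path `P`, the vertex `u` has no neighbour on `P`, and `w` has a
neighbour on `P` below `u`, then `P` is not a longest path. -/
theorem exists_longer_path (h : StronglyOrdered G c r) {a b u w p : W} (P : G.Walk a b)
    (hP : P.IsPath) (hwP : w ∉ P.support) (hu : ∀ x ∈ P.support, x ≠ u ∧ ¬ G.Adj u x)
    (huw : G.Adj u w) (hp : p ∈ P.support) (hwp : G.Adj w p) (hr : r p < r u) :
    ∃ (a' b' : W) (Q : G.Walk a' b'), Q.IsPath ∧ P.length < Q.length := by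
  classical
  have hcuw := h.color_ne huw
  let K : W → Prop := fun v ↦ (c v = c w → r v < r w) ∧ (c v = c u → r v < r u)
  have hstep : ∀ x ∈ P.support, ∀ y ∈ P.support, G.Adj x y → K x → K y := by
    intro x hx y hy hxy hKx
    have hcxy := h.color_ne hxy
    refine ⟨fun hc ↦ ?_, fun hc ↦ ?_⟩
    · by_contra hlt
      have hcx : c x = c u := by
        cases hh : c x <;> cases hh' : c u <;> cases hh'' : c w <;> simp_all
      have hne : w ≠ y := by rintro rfl; exact hwP hy
      exact (hu y hy).2 (h.cross hcx hc.symm (hKx.2 hcx) (h.lt_of_le_of_ne (not_lt.1 hlt) hne)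
        hxy huw).2
    · by_contra hlt
      have hcx : c x = c w := by
        cases hh : c x <;> cases hh' : c u <;> cases hh'' : c w <;> simp_all
      exact (hu x hx).2 (h.cross hcx hc.symm (hKx.1 hcx)
        (h.lt_of_le_of_ne (not_lt.1 hlt) (hu y hy).1.symm) hxy huw.symm).1.symm
  have hwalk : ∀ {a b : W} (P' : G.Walk a b), (∀ x ∈ P'.support, x ∈ P.support) → K a →
      ∀ v ∈ P'.support, K v := by
    intro a b P'
    induction P' with
    | nil => intro _ hK v hv; simp at hv; exact hv ▸ hK
    | cons hadj P' ih =>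
      intro hsub hK v hv
      rw [SimpleGraph.Walk.support_cons, List.mem_cons] at hv
      rcases hv with rfl | hv
      · exact hK
      · exact ih (fun x hx ↦ hsub x (by simp [hx]))
          (hstep _ (hsub _ (by simp)) _ (hsub _ (by simp)) hadj hK) v hv
  have hcp : c p = c u := by
    have := h.color_ne hwp
    cases hh : c p <;> cases hh' : c u <;> cases hh'' : c w <;> simp_all
  have hKp : K p := ⟨fun e ↦ absurd (hcp.symm.trans e) hcuw, fun _ ↦ hr⟩
  have hKa : K a := hwalk (P.takeUntil p hp).reverse
    (fun x hx ↦ P.support_takeUntil_subset_support hp (by simpa using hx)) hKp a (by simp)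
  have hK : ∀ v ∈ P.support, K v := hwalk P (fun _ hx ↦ hx) hKa
  have hdone : ∀ l : List W, l.Nodup → l.IsChain G.Adj → P.support.length < l.length →
      ∃ (a' b' : W) (Q : G.Walk a' b'), Q.IsPath ∧ P.length < Q.length := by
    intro l hnd hch hlen
    have hne : l ≠ [] := by rintro rfl; simp at hlen
    refine ⟨_, _, .ofSupport l hne hch, ?_, ?_⟩
    · rw [SimpleGraph.Walk.isPath_def, SimpleGraph.Walk.support_ofSupport]
      exact hnd
    · have := (SimpleGraph.Walk.ofSupport l hne hch).length_support
      rw [SimpleGraph.Walk.support_ofSupport] at this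
      rw [SimpleGraph.Walk.length_support] at hlen
      omega
  have hwadj : ∀ d ∈ P.support, c d = c u → r p ≤ r d → G.Adj w d := fun d hd hcd hpd ↦
    h.adj_of_le hwp huw.symm hcd hpd ((hK d hd).2 hcd)
  have hu' : u ∉ P.support := fun hmem ↦ (hu u hmem).1 rfl
  obtain ⟨l', hperm, hch', e, t, rfl, he, ht⟩ := h.exists_perm_headsMax P.support
    P.support_ne_nil hP.support_nodup P.isChain_adj_support
  have hnd' := hperm.nodup_iff.2 hP.support_nodup
  have hue : u ∉ e :: t := fun hm ↦ hu' (hperm.subset hm)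
  have hwe : w ∉ e :: t := fun hm ↦ hwP (hperm.subset hm)
  have hpe := hperm.symm.subset hp
  by_cases hce : c e = c u
  · have hwadj_e := hwadj e (hperm.subset (by simp)) hce (he p hpe (hcp.trans hce.symm))
    refine hdone (u :: w :: e :: t) ?_ (.cons_cons huw (.cons_cons hwadj_e hch')) ?_
    · simp only [List.nodup_cons, List.mem_cons] at hnd' hue hwe ⊢
      exact ⟨by have := huw.ne; tauto, hwe, hnd'⟩
    · rw [← hperm.length_eq]; simp
  · rcases t with _ | ⟨d, t⟩
    · simp only [List.mem_singleton] at hpe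
      exact absurd (hpe ▸ hcp) hce
    · rw [List.isChain_cons_cons] at hch'
      have hcd : c d = c u := by
        have := h.color_ne hch'.1
        cases hh : c d <;> cases hh' : c u <;> cases hh'' : c e <;> simp_all
      have hwadj_d := hwadj d (hperm.subset (by simp)) hcd
        (ht d (by simp) p hpe (hcp.trans hcd.symm))
      refine hdone (u :: w :: d :: t) ?_ (.cons_cons huw (.cons_cons hwadj_d hch'.2)) ?_
      · simp only [List.nodup_cons, List.mem_cons] at hnd' hue hwe ⊢
        exact ⟨by have := huw.ne; tauto, by tauto, hnd'.2⟩
      · rw [← hperm.length_eq]; simp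

/-- A two-colourable permutation graph is strongly ordered. -/
theorem exists_of_isPermutationGraph (hbip : G.Colorable 2) (hperm : IsPermutationGraph G) :
    ∃ (c : W → Bool) (r : W → ℝ), StronglyOrdered G c r := by
  obtain ⟨f, g, hf, hg, hadj⟩ := hperm
  obtain ⟨C⟩ := hbip
  let e : Fin 2 ≃ Bool := finTwoEquiv
  have hmono : ∀ {u v}, e (C u) = e (C v) → f u < f v → g u < g v := by
    intro u v hC hlt
    by_contra hge
    have hne : u ≠ v := by rintro rfl; exact lt_irrefl _ hlt
    have : g v < g u := (not_lt.1 hge).lt_of_ne fun e ↦ hne (hg e).symm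
    exact C.valid ((hadj u v).2 ⟨hne, .inl ⟨hlt, this⟩⟩) (e.injective hC)
  have hadj' : ∀ u v, G.Adj u v ↔ (f u < f v ∧ g v < g u) ∨ (f v < f u ∧ g u < g v) := by
    intro u v
    rw [hadj, and_iff_right_iff_imp]
    rintro (h | h) rfl <;> exact lt_irrefl _ h.1
  refine ⟨fun v ↦ e (C v), f, hf, fun huv hC ↦ C.valid huv (e.injective hC), ?_, ?_⟩
  · intro a a' b b' ha hb hfa hfb h1 h2
    have hga := hmono ha hfa
    have hgb := hmono hb hfb
    rw [hadj'] at h1 h2 ⊢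
    rw [hadj']
    rcases h1 with h1 | h1 <;> rcases h2 with h2 | h2
    · exact ⟨.inl ⟨by linarith, by linarith⟩, .inl ⟨by linarith, by linarith⟩⟩
    · linarith
    · linarith
    · exact ⟨.inr ⟨by linarith, by linarith⟩, .inr ⟨by linarith, by linarith⟩⟩
  · intro a b b' b'' hb hb' hfb hfb' h1 h2
    have hgb := hmono hb hfb
    have hgb' := hmono hb' hfb'
    rw [hadj'] at h1 h2 ⊢
    rcases h1 with h1 | h1 <;> rcases h2 with h2 | h2
    · exact .inl ⟨by linarith, by linarith⟩
    · linarith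
    · linarith
    · exact .inr ⟨by linarith, by linarith⟩

/-- A longest path in a connected strongly ordered graph is dominating. -/
theorem exists_mem_or_adj_of_longest (h : StronglyOrdered G c r) (hG : G.Connected) {a b : W}
    (P : G.Walk a b) (hP : P.IsPath)
    (hmax : ∀ (a' b' : W) (Q : G.Walk a' b'), Q.IsPath → Q.length ≤ P.length) (v : W) :
    ∃ x ∈ P.support, x = v ∨ G.Adj v x := by
  by_contra hv
  obtain ⟨q⟩ := hG.preconnected a v
  obtain ⟨⟨⟨w, u⟩, hwu⟩, -, ⟨p, hp, hwp⟩, hu⟩ := q.exists_boundary_dart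
    {v | ∃ x ∈ P.support, x = v ∨ G.Adj v x} ⟨a, by simp, .inl rfl⟩ hv
  simp only [Set.mem_ofPred_eq, not_exists, not_and, not_or] at hu hwp
  replace hwu : G.Adj w u := hwu
  have hwP : w ∉ P.support := fun hw ↦ (hu w hw).2 hwu.symm
  have hwp : G.Adj w p := hwp.resolve_left fun e ↦ hwP (e ▸ hp)
  have hpu : r p ≠ r u := fun e ↦ (hu p hp).1 (h.injective e)
  obtain ⟨a', b', Q, hQ, hlt⟩ :
      ∃ (a' b' : W) (Q : G.Walk a' b'), Q.IsPath ∧ P.length < Q.length := by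
    rcases hpu.lt_or_gt with hr | hr
    · exact h.exists_longer_path P hP hwP hu hwu.symm hp hwp hr
    · exact h.neg.exists_longer_path P hP hwP hu hwu.symm hp hwp (neg_lt_neg hr)
  exact absurd (hmax _ _ Q hQ) (not_le.2 hlt)

end StronglyOrdered

theorem stmt14 (G : SimpleGraph V) (hG : G.Connected)
    (hbip : G.Colorable 2) (hperm : IsPermutationGraph G)
    (hnoham : ¬ ∃ (a b : V) (P : G.Walk a b), P.IsPath ∧ P.IsHamiltonian) :
    ∀ (a b : V) (P : G.Walk a b), IsLongestPath G P →
      (∀ u : V, walkDist G P u ≤ 1) ∧ eccW G P = pe G := by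
  intro a b P ⟨hP, hmax⟩
  obtain ⟨c, r, h⟩ := StronglyOrdered.exists_of_isPermutationGraph hbip hperm
  have hdom : ∀ u, walkDist G P u ≤ 1 := by
    intro u
    obtain ⟨x, hx, hux⟩ := h.exists_mem_or_adj_of_longest hG P hP hmax u
    refine (Finset.inf'_le _ (List.mem_toFinset.2 hx)).trans ?_
    rcases hux with rfl | hux
    · simp
    · exact (dist_eq_one_iff_adj.2 hux).le
  refine ⟨hdom, le_antisymm ?_ (Nat.sInf_le ⟨a, b, P, hP, rfl⟩)⟩
  refine le_csInf ⟨_, a, b, P, hP, rfl⟩ ?_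
  rintro _ ⟨a', b', Q, hQ, rfl⟩
  refine (Finset.sup_le fun u _ ↦ hdom u).trans (Nat.one_le_iff_ne_zero.2 fun h0 ↦ hnoham ?_)
  refine ⟨a', b', Q, hQ, hQ.isHamiltonian_iff.2 fun u ↦ ?_⟩
  have hu : walkDist G Q u = 0 := by
    have : walkDist G Q u ≤ eccW G Q := Finset.le_sup (Finset.mem_univ u)
    omega
  obtain ⟨x, hx, hux⟩ := Finset.exists_mem_eq_inf'
    ⟨a', List.mem_toFinset.mpr Q.start_mem_support⟩ (fun x ↦ G.dist u x)
  have hdist : G.dist u x = 0 := hux.symm.trans hu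
  rw [hG.dist_eq_zero_iff] at hdist
  exact hdist ▸ List.mem_toFinset.1 hx
end

section
/- Every connected biconvex bipartite graph has a dominating path; that is, if G is connected and biconvex then pe(G) ≤ 1. -/
open SimpleGraph

variable {V : Type*} [Fintype V] [DecidableEq V]

namespace BiconvexPath

variable {W : Type*} {G : SimpleGraph W} {X Y : Set W} {f g : W → ℤ}

/-- The neighbourhood of every vertex of `Y` is consecutive in the order of `X` given by `f`. -/
def ConvexOver (G : SimpleGraph W) (X Y : Set W) (f : W → ℤ) : Prop :=
  ∀ y ∈ Y, ∀ x₁ ∈ X, ∀ x₂ ∈ X, ∀ x₃ ∈ X,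
    G.Adj y x₁ → G.Adj y x₃ → f x₁ ≤ f x₂ → f x₂ ≤ f x₃ → G.Adj y x₂

/-- A path can be extended at its start by a neighbour, unless it contains it already. -/
lemma exists_isPath_insert {u v p : W} (P : G.Walk u v) (hP : P.IsPath) (h : G.Adj p u) :
    ∃ (s : W) (Q : G.Walk s v), Q.IsPath ∧ p ∈ Q.support ∧ ∀ w ∈ P.support, w ∈ Q.support := by
  by_cases hp : p ∈ P.support
  · exact ⟨u, P, hP, hp, fun w hw => hw⟩
  · exact ⟨p, P.cons h, hP.cons hp, by simp,
      fun w hw => by simp [hw]⟩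

/-- Any two edges of a connected graph have their endpoints on a common path. -/
lemma exists_isPath_through_edges (hG : G.Connected) {a p b q : W}
    (hap : G.Adj a p) (hbq : G.Adj b q) :
    ∃ (s t : W) (P : G.Walk s t), P.IsPath ∧
      a ∈ P.support ∧ p ∈ P.support ∧ b ∈ P.support ∧ q ∈ P.support := by
  classical
  obtain ⟨P⟩ := hG.preconnected a b
  obtain ⟨s, Q, hQ, hp, hsub⟩ :=
    exists_isPath_insert P.bypass P.bypass_isPath hap.symm
  obtain ⟨t, R, hR, hq, hsub'⟩ :=
    exists_isPath_insert Q.reverse hQ.reverse hbq.symm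
  have hmem : ∀ w ∈ Q.support, w ∈ R.support := fun w hw => hsub' w (by simpa using hw)
  exact ⟨t, s, R, hR, hmem a (hsub a P.bypass.start_mem_support), hmem p hp,
    hmem b (hsub b P.bypass.end_mem_support), hq⟩

/-- A walk meeting `X` on both sides of a threshold contains a vertex of `Y` with neighbours on
both sides. -/
lemma exists_crossing (hdisj : Disjoint X Y)
    (hbip : ∀ u v, G.Adj u v → (u ∈ X ∧ v ∈ Y) ∨ (u ∈ Y ∧ v ∈ X))
    {s t a b : W} (P : G.Walk s t) (c : ℤ)
    (ha : a ∈ P.support) (hb : b ∈ P.support) (haX : a ∈ X) (hbX : b ∈ X)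
    (hac : f a ≤ c) (hcb : c < f b) :
    ∃ y ∈ P.support, y ∈ Y ∧ ∃ w w', G.Adj y w ∧ G.Adj y w' ∧ f w ≤ c ∧ c < f w' := by
  by_contra hno
  have hXY : ∀ v, v ∈ X → v ∈ Y → False := fun v hx hy => Set.disjoint_left.1 hdisj hx hy
  let L : W → Prop := fun u => (u ∈ X → f u ≤ c) ∧ (u ∈ Y → ∀ w, G.Adj u w → f w ≤ c)
  have step : ∀ u v, G.Adj u v → v ∈ P.support → L u → L v := by
    intro u v huv hv hu
    rcases hbip u v huv with ⟨hu', hv'⟩ | ⟨hu', hv'⟩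
    · refine ⟨fun h => (hXY v h hv').elim, fun _ w hw => ?_⟩
      by_contra hlt
      exact hno ⟨v, hv, hv', u, w, huv.symm, hw, hu.1 hu', not_le.1 hlt⟩
    · exact ⟨fun _ => hu.2 hu' v huv, fun h => (hXY v hv' h).elim⟩
  have key : ∀ {s' t' : W} (Q : G.Walk s' t'), (∀ w ∈ Q.support, w ∈ P.support) →
      ∀ w ∈ Q.support, (L w ↔ L s') := by
    intro s' t' Q
    induction Q with
    | nil => intro _ w hw; simp at hw; rw [hw]
    | cons h Q ih =>
      intro hsub w hw
      have hs := hsub _ (SimpleGraph.Walk.start_mem_support _)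
      rw [Walk.support_cons, List.mem_cons] at hw
      have hsub' : ∀ w ∈ Q.support, w ∈ P.support := fun w hw => hsub w (by simp [hw])
      rcases hw with rfl | hw
      · rfl
      · have ht := hsub' _ (SimpleGraph.Walk.start_mem_support _)
        exact (ih hsub' w hw).trans
          ⟨step _ _ h.symm hs, step _ _ h ht⟩
  have hLa : L a := ⟨fun _ => hac, fun h => (hXY a haX h).elim⟩
  have hLb : L b := (key P (fun _ h => h) b hb).2 ((key P (fun _ h => h) a ha).1 hLa)
  exact absurd (hLb.1 hbX) (not_le.2 hcb)

/-- A walk containing `a, b ∈ X` dominates every vertex of `X` between them. -/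
lemma exists_adj_of_between (hdisj : Disjoint X Y)
    (hbip : ∀ u v, G.Adj u v → (u ∈ X ∧ v ∈ Y) ∨ (u ∈ Y ∧ v ∈ X)) (hconv : ConvexOver G X Y f)
    {s t a b x : W} (P : G.Walk s t)
    (ha : a ∈ P.support) (hb : b ∈ P.support) (haX : a ∈ X) (hbX : b ∈ X) (hxX : x ∈ X)
    (hax : f a ≤ f x) (hxb : f x < f b) :
    ∃ y ∈ P.support, G.Adj x y := by
  obtain ⟨y, hy, hyY, w, w', hw, hw', h1, h2⟩ :=
    exists_crossing hdisj hbip P (f x) ha hb haX hbX hax hxb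
  have hmem : ∀ w, G.Adj y w → w ∈ X := fun w hw => by
    rcases hbip y w hw with h | h
    · exact (Set.disjoint_left.1 hdisj h.1 hyY).elim
    · exact h.2
  exact ⟨y, hy, (hconv y hyY w (hmem w hw) x hxX w' (hmem w' hw') hw hw' h1 h2.le).symm⟩

/-- If `a` has a neighbour weakly before `p` and `b` has one weakly after `p`, then `p` has a
neighbour between `a` and `b`. -/
lemma exists_adj_between [Finite W] (hG : G.Connected) (hdisj : Disjoint X Y)
    (hbip : ∀ u v, G.Adj u v → (u ∈ X ∧ v ∈ Y) ∨ (u ∈ Y ∧ v ∈ X)) (hf : Set.InjOn f X)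
    (hconvX : ConvexOver G X Y f) (hconvY : ConvexOver G Y X g)
    {a b p y₁ y₂ : W} (haX : a ∈ X) (hbX : b ∈ X) (hp : p ∈ Y) (hab : f a ≤ f b)
    (hay : G.Adj a y₁) (hby : G.Adj b y₂) (h₁ : g y₁ ≤ g p) (h₂ : g p ≤ g y₂) :
    ∃ x ∈ X, G.Adj x p ∧ f a ≤ f x ∧ f x ≤ f b := by
  have hXY : ∀ x y, x ∈ X → G.Adj x y → y ∈ Y := fun x y hx h => by
    rcases hbip x y h with h | h
    · exact h.2
    · exact (Set.disjoint_left.1 hdisj hx h.1).elim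
  have hYX : ∀ y x, y ∈ Y → G.Adj y x → x ∈ X := fun y x hy h => by
    rcases hbip y x h with h | h
    · exact (Set.disjoint_left.1 hdisj h.1 hy).elim
    · exact h.2
  let A : Set W := {x | x ∈ X ∧ f a ≤ f x ∧ f x ≤ f b ∧ ∀ y, G.Adj x y → g y < g p}
  by_cases haA : a ∈ A
  · obtain ⟨i, hi, himax⟩ := Set.exists_max_image A f (Set.toFinite A) ⟨a, haA⟩
    obtain ⟨hiX, hai, hib, hinb⟩ := hi
    have hlt : f i < f b := by
      refine lt_of_le_of_ne hib fun h => ?_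
      have := hf hiX hbX h
      subst this
      exact absurd (hinb _ hby) (not_lt.2 h₂)
    let B : Set W := {x | x ∈ X ∧ f i < f x}
    obtain ⟨j, ⟨hjX, hij⟩, hjmin⟩ := Set.exists_min_image B f (Set.toFinite B) ⟨b, hbX, hlt⟩
    have hjb : f j ≤ f b := hjmin b ⟨hbX, hlt⟩
    obtain ⟨P⟩ := hG.preconnected i j
    obtain ⟨y, -, hyY, w, w', hw, hw', hwi, hiw'⟩ := exists_crossing hdisj hbip P (f i)
      P.start_mem_support P.end_mem_support hiX hjX le_rfl hij
    have hwX := hYX y w hyY hw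
    have hwX' := hYX y w' hyY hw'
    have hyi := hconvX y hyY w hwX i hiX w' hwX' hw hw' hwi hiw'.le
    have hyj := hconvX y hyY w hwX j hjX w' hwX' hw hw' (by omega) (hjmin w' ⟨hwX', hiw'⟩)
    have hjA : ∃ y', G.Adj j y' ∧ g p ≤ g y' := by
      by_contra! hcon
      have := himax j ⟨hjX, by omega, hjb, hcon⟩
      omega
    obtain ⟨y', hjy', hpy'⟩ := hjA
    exact ⟨j, hjX, hconvY j hjX y hyY p hp y' (hXY j y' hjX hjy') hyj.symm hjy'
      (hinb y hyi.symm).le hpy', by omega, hjb⟩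
  · have : ∃ y, G.Adj a y ∧ g p ≤ g y := by
      by_contra! hcon
      exact haA ⟨haX, le_rfl, hab, hcon⟩
    obtain ⟨y, hy, hpy⟩ := this
    exact ⟨a, haX, hconvY a haX y₁ (hXY a y₁ haX hay) p hp y (hXY a y haX hy) hay hy h₁ hpy,
      le_rfl, hab⟩

/-- A connected biconvex graph has a dominating path, given neighbours `a` and `b` of the first
and last vertex of `Y` with `a` weakly before `b`. -/
lemma exists_dominating_isPath_of_le [Finite W] (hG : G.Connected) (hdisj : Disjoint X Y)
    (hcover : ∀ u, u ∈ X ∨ u ∈ Y)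
    (hbip : ∀ u v, G.Adj u v → (u ∈ X ∧ v ∈ Y) ∨ (u ∈ Y ∧ v ∈ X)) (hf : Set.InjOn f X)
    (hconvX : ConvexOver G X Y f) (hconvY : ConvexOver G Y X g)
    {a b y₁ y₂ x₁ x₂ p q : W} (haX : a ∈ X) (hbX : b ∈ X) (hab : f a ≤ f b)
    (hy₁ : y₁ ∈ Y) (hy₂ : y₂ ∈ Y) (hx₁ : x₁ ∈ X) (hx₂ : x₂ ∈ X) (hp : p ∈ Y) (hq : q ∈ Y)
    (hay : G.Adj a y₁) (hby : G.Adj b y₂) (hpx : G.Adj p x₁) (hqx : G.Adj q x₂)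
    (hymin : ∀ y ∈ Y, g y₁ ≤ g y) (hymax : ∀ y ∈ Y, g y ≤ g y₂)
    (hxmin : ∀ x ∈ X, f x₁ ≤ f x) (hxmax : ∀ x ∈ X, f x ≤ f x₂) :
    ∃ (s t : W) (P : G.Walk s t), P.IsPath ∧ ∀ u, ∃ v ∈ P.support, u = v ∨ G.Adj u v := by
  obtain ⟨r, hrX, hrp, har, -⟩ := exists_adj_between hG hdisj hbip hf hconvX hconvY haX hbX hp hab
    hay hby (hymin p hp) (hymax p hp)
  obtain ⟨r', hrX', hrq, -, hrb⟩ := exists_adj_between hG hdisj hbip hf hconvX hconvY haX hbX hq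
    hab hay hby (hymin q hq) (hymax q hq)
  have hpa : G.Adj p a := hconvX p hp x₁ hx₁ a haX r hrX hpx hrp.symm (hxmin a haX) har
  have hqb : G.Adj q b := hconvX q hq r' hrX' b hbX x₂ hx₂ hrq.symm hqx hrb (hxmax b hbX)
  obtain ⟨s, t, P, hP, haP, hpP, hbP, hqP⟩ := exists_isPath_through_edges hG hpa.symm hqb.symm
  refine ⟨s, t, P, hP, fun u => ?_⟩
  rcases hcover u with hu | hu
  · rcases le_total (f u) (f a) with h | h
    · exact ⟨p, hpP, .inr (hconvX p hp x₁ hx₁ u hu a haX hpx hpa (hxmin u hu) h).symm⟩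
    rcases le_or_gt (f b) (f u) with h' | h'
    · exact ⟨q, hqP, .inr (hconvX q hq b hbX u hu x₂ hx₂ hqb hqx h' (hxmax u hu)).symm⟩
    obtain ⟨y, hy, hadj⟩ := exists_adj_of_between hdisj hbip hconvX P haP hbP haX hbX hu h h'
    exact ⟨y, hy, .inr hadj⟩
  · rcases le_total (g u) (g p) with h | h
    · exact ⟨a, haP, .inr (hconvY a haX y₁ hy₁ u hu p hp hay hpa.symm (hymin u hu) h).symm⟩
    rcases le_or_gt (g q) (g u) with h' | h'
    · exact ⟨b, hbP, .inr (hconvY b hbX q hq u hu y₂ hy₂ hqb.symm hby h' (hymax u hu)).symm⟩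
    obtain ⟨y, hy, hadj⟩ := exists_adj_of_between hdisj.symm (fun u v h => (hbip u v h).symm)
      hconvY P hpP hqP hp hq hu h h'
    exact ⟨y, hy, .inr hadj⟩

lemma ConvexOver.neg (h : ConvexOver G X Y f) : ConvexOver G X Y (-f) :=
  fun y hy x₁ h₁ x₂ h₂ x₃ h₃ a₁ a₃ h₁₂ h₂₃ => by
    simp only [Pi.neg_apply, neg_le_neg_iff] at h₁₂ h₂₃
    exact h y hy x₃ h₃ x₂ h₂ x₁ h₁ a₃ a₁ h₂₃ h₁₂

theorem exists_dominating_isPath [Finite W] (hG : G.Connected) (hdisj : Disjoint X Y)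
    (hcover : ∀ u, u ∈ X ∨ u ∈ Y)
    (hbip : ∀ u v, G.Adj u v → (u ∈ X ∧ v ∈ Y) ∨ (u ∈ Y ∧ v ∈ X)) (hf : Set.InjOn f X)
    (hconvX : ConvexOver G X Y f) (hconvY : ConvexOver G Y X g) :
    ∃ (s t : W) (P : G.Walk s t), P.IsPath ∧ ∀ u, ∃ v ∈ P.support, u = v ∨ G.Adj u v := by
  obtain ⟨o⟩ := hG.nonempty
  rcases subsingleton_or_nontrivial W with hW | hW
  · exact ⟨o, o, .nil, by simp, fun u => ⟨o, by simp, .inl (Subsingleton.elim _ _)⟩⟩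
  have hadj : ∀ u, ∃ v, G.Adj u v := fun u => hG.preconnected.exists_adj_of_nontrivial u
  have hXadj : ∀ x ∈ X, ∃ y ∈ Y, G.Adj x y := fun x hx => by
    obtain ⟨y, hy⟩ := hadj x
    rcases hbip x y hy with h | h
    · exact ⟨y, h.2, hy⟩
    · exact (Set.disjoint_left.1 hdisj hx h.1).elim
  have hYadj : ∀ y ∈ Y, ∃ x ∈ X, G.Adj y x := fun y hy => by
    obtain ⟨x, hx⟩ := hadj y
    rcases hbip y x hx with h | h
    · exact (Set.disjoint_left.1 hdisj h.1 hy).elim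
    · exact ⟨x, h.2, hx⟩
  have hne : X.Nonempty ∧ Y.Nonempty := by
    obtain ⟨v, hv⟩ := hadj o
    rcases hbip o v hv with h | h
    · exact ⟨⟨o, h.1⟩, ⟨v, h.2⟩⟩
    · exact ⟨⟨v, h.2⟩, ⟨o, h.1⟩⟩
  obtain ⟨x₁, hx₁, hxmin⟩ := Set.exists_min_image X f (Set.toFinite X) hne.1
  obtain ⟨x₂, hx₂, hxmax⟩ := Set.exists_max_image X f (Set.toFinite X) hne.1
  obtain ⟨y₁, hy₁, hymin⟩ := Set.exists_min_image Y g (Set.toFinite Y) hne.2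
  obtain ⟨y₂, hy₂, hymax⟩ := Set.exists_max_image Y g (Set.toFinite Y) hne.2
  obtain ⟨a, haX, hay⟩ := hYadj y₁ hy₁
  obtain ⟨b, hbX, hby⟩ := hYadj y₂ hy₂
  obtain ⟨p, hp, hpx⟩ := hXadj x₁ hx₁
  obtain ⟨q, hq, hqx⟩ := hXadj x₂ hx₂
  rcases le_total (f a) (f b) with hab | hab
  · exact exists_dominating_isPath_of_le hG hdisj hcover hbip hf hconvX hconvY haX hbX hab
      hy₁ hy₂ hx₁ hx₂ hp hq hay.symm hby.symm hpx.symm hqx.symm hymin hymax hxmin hxmax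
  · exact exists_dominating_isPath_of_le hG hdisj hcover hbip hf hconvX hconvY.neg hbX haX hab
      hy₂ hy₁ hx₁ hx₂ hp hq hby.symm hay.symm hpx.symm hqx.symm
      (fun y hy => neg_le_neg (hymax y hy)) (fun y hy => neg_le_neg (hymin y hy)) hxmin hxmax

end BiconvexPath

lemma walkDist_le_one {W : Type*} [DecidableEq W] {G : SimpleGraph W} {a b u v : W}
    (P : G.Walk a b) (hv : v ∈ P.support) (h : u = v ∨ G.Adj u v) : walkDist G P u ≤ 1 := by
  refine (Finset.inf'_le _ (List.mem_toFinset.mpr hv)).trans ?_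
  rcases h with rfl | h
  · simp
  · exact (dist_eq_one_iff_adj.2 h).le

theorem stmt17 (G : SimpleGraph V) (hG : G.Connected)
    (X Y : Finset V) (hdisj : Disjoint X Y) (hcover : X ∪ Y = Finset.univ)
    (hbip : ∀ u v : V, G.Adj u v → (u ∈ X ∧ v ∈ Y) ∨ (u ∈ Y ∧ v ∈ X))
    (f g : V → ℕ) (hf : Set.InjOn f ↑X) (hg : Set.InjOn g ↑Y)
    (hconvexX : ∀ y ∈ Y, ∀ x₁ ∈ X, ∀ x₂ ∈ X, ∀ x₃ ∈ X,
      G.Adj y x₁ → G.Adj y x₃ → f x₁ ≤ f x₂ → f x₂ ≤ f x₃ → G.Adj y x₂)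
    (hconvexY : ∀ x ∈ X, ∀ y₁ ∈ Y, ∀ y₂ ∈ Y, ∀ y₃ ∈ Y,
      G.Adj x y₁ → G.Adj x y₃ → g y₁ ≤ g y₂ → g y₂ ≤ g y₃ → G.Adj x y₂) :
    (∃ (a b : V) (P : G.Walk a b), P.IsPath ∧ ∀ u : V, walkDist G P u ≤ 1) ∧
      pe G ≤ 1 := by
  have hpath : ∃ (a b : V) (P : G.Walk a b), P.IsPath ∧ ∀ u : V, walkDist G P u ≤ 1 := by
    obtain ⟨s, t, P, hP, hdom⟩ := BiconvexPath.exists_dominating_isPath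
      (f := fun v => (f v : ℤ)) (g := fun v => (g v : ℤ)) (X := (X : Set V)) (Y := (Y : Set V)) hG
      (Finset.disjoint_coe.2 hdisj)
      (fun u => by simpa using hcover.ge (Finset.mem_univ u)) hbip
      (fun x hx y hy h => hf hx hy (Int.ofNat.inj h))
      (fun y hy x₁ h₁ x₂ h₂ x₃ h₃ a₁ a₃ h₁₂ h₂₃ => hconvexX y hy x₁ h₁ x₂ h₂ x₃ h₃ a₁ a₃
        (Int.ofNat_le.1 h₁₂) (Int.ofNat_le.1 h₂₃))
      (fun x hx y₁ h₁ y₂ h₂ y₃ h₃ a₁ a₃ h₁₂ h₂₃ => hconvexY x hx y₁ h₁ y₂ h₂ y₃ h₃ a₁ a₃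
        (Int.ofNat_le.1 h₁₂) (Int.ofNat_le.1 h₂₃))
    refine ⟨s, t, P, hP, fun u => ?_⟩
    obtain ⟨v, hv, huv⟩ := hdom u
    exact walkDist_le_one P hv huv
  refine ⟨hpath, ?_⟩
  obtain ⟨a, b, P, hP, hdom⟩ := hpath
  have hle : pe G ≤ eccW G P := Nat.sInf_le ⟨a, b, P, hP, rfl⟩
  exact hle.trans (Finset.sup_le fun u _ => hdom u)
end
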